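/- arXiv:1201.2390 — 7 statements merged into one kernel-verified Lean document; each statement's English description precedes it below -/
import Mathlib

section
/- Let ω be a continuous strictly increasing concave function from [0,∞) to [0,∞) with ω(0) = 0, and let f be an operator on a convex subset D of a Banach space X, Fréchet differentiable at every point of D. If for some h₀ ≥ 0 and some points x', x'' ∈ D the inequality ‖f'(x'') − f'(x')‖ ≤ ω(ω⁻¹(min{‖f'(x')‖, ‖f'(x'')‖} − h₀) + ‖x'' − x'‖) − (min{‖f'(x')‖, ‖f'(x'')‖} − h₀) holds, then for every h > h₀ (with min{‖f'(x')‖, ‖f'(x'')‖} − h ≥ 0) the same inequality holds with h in place of h₀, for the same points x', x''. -/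
/-!
Put `m = min ‖f' x'‖ ‖f' x''‖`, `d = ‖x'' - x'‖` and `u(h) = ωinv (m - h)`. Since
`ω (u h) = m - h`, the right-hand side of the inequality is the increment
`ω (u h + d) - ω (u h)`. Raising `h` lowers `u h`, because `ω` is strictly increasing, and
increments of a concave function over intervals of fixed length do not increase with the left
endpoint (`ConcaveOn.increment_antitone`), so the right-hand side can only grow.
-/

/-- Both `a + d` and `b` are convex combinations of `a` and `b + d`, with
the weights swapped; adding the two concavity inequalities gives the claim. -/
theorem ConcaveOn.increment_antitone {ω : ℝ → ℝ} (hω : ConcaveOn ℝ (Set.Ici 0) ω)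
    {a b d : ℝ} (ha : 0 ≤ a) (hab : a < b) (hd : 0 ≤ d) :
    ω (b + d) - ω b ≤ ω (a + d) - ω a := by
  have hL : 0 < b + d - a := by linarith
  have hs : 0 ≤ (b - a) / (b + d - a) := div_nonneg (by linarith) hL.le
  have ht : 0 ≤ d / (b + d - a) := div_nonneg hd hL.le
  have hst : (b - a) / (b + d - a) + d / (b + d - a) = 1 := by
    field_simp
    ring
  have hbd : b + d ∈ Set.Ici (0 : ℝ) := Set.mem_Ici.2 (by linarith)
  have h1 := hω.2 (Set.mem_Ici.2 ha) hbd hs ht hst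
  have h2 := hω.2 (Set.mem_Ici.2 ha) hbd ht hs (by linarith)
  simp only [smul_eq_mul] at h1 h2
  have e1 : (b - a) / (b + d - a) * a + d / (b + d - a) * (b + d) = a + d := by
    field_simp
    ring
  have e2 : d / (b + d - a) * a + (b - a) / (b + d - a) * (b + d) = b := by
    field_simp
    ring
  rw [e1] at h1
  rw [e2] at h2
  linear_combination h1 + h2 - (ω a + ω (b + d)) * hst

/-- If the regular-smoothness inequality holds for some `h₀ ≥ 0` at points
`x', x'' ∈ D`, then it holds for every `h > h₀` (with `min ‖f'(x')‖ ‖f'(x'')‖ - h ≥ 0`)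
at the same points. -/
theorem regular_smoothness_monotone_in_h
    {X : Type*} [NormedAddCommGroup X] [NormedSpace ℝ X]
    (D : Set X) (hD : Convex ℝ D)
    (f : X → X) (f' : X → X →L[ℝ] X)
    (hf : ∀ x ∈ D, HasFDerivWithinAt f (f' x) D x)
    (ω ωinv : ℝ → ℝ)
    (hω_cont : ContinuousOn ω (Set.Ici 0))
    (hω_mono : StrictMonoOn ω (Set.Ici 0))
    (hω_conc : ConcaveOn ℝ (Set.Ici 0) ω)
    (hω0 : ω 0 = 0)
    (hω_nonneg : ∀ t, 0 ≤ t → 0 ≤ ω t)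
    (hωinv_left : ∀ t, 0 ≤ t → ωinv (ω t) = t)
    (hωinv_right : ∀ s, 0 ≤ s → 0 ≤ ωinv s ∧ ω (ωinv s) = s)
    (h₀ : ℝ) (hh₀ : 0 ≤ h₀)
    (x' x'' : X) (hx' : x' ∈ D) (hx'' : x'' ∈ D)
    (hmin₀ : 0 ≤ min ‖f' x'‖ ‖f' x''‖ - h₀)
    (hineq : ‖f' x'' - f' x'‖ ≤
      ω (ωinv (min ‖f' x'‖ ‖f' x''‖ - h₀) + ‖x'' - x'‖) - (min ‖f' x'‖ ‖f' x''‖ - h₀)) :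
    ∀ h : ℝ, h₀ < h → 0 ≤ min ‖f' x'‖ ‖f' x''‖ - h →
      ‖f' x'' - f' x'‖ ≤
        ω (ωinv (min ‖f' x'‖ ‖f' x''‖ - h) + ‖x'' - x'‖) - (min ‖f' x'‖ ‖f' x''‖ - h) := by
  intro h hh hm
  obtain ⟨hb, hωb⟩ := hωinv_right _ hmin₀
  obtain ⟨ha, hωa⟩ := hωinv_right _ hm
  have hab : ωinv (min ‖f' x'‖ ‖f' x''‖ - h) < ωinv (min ‖f' x'‖ ‖f' x''‖ - h₀) := by
    rw [← hω_mono.lt_iff_lt (Set.mem_Ici.2 ha) (Set.mem_Ici.2 hb), hωa, hωb]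
    linarith
  have key := hω_conc.increment_antitone ha hab (norm_nonneg (x'' - x'))
  rw [hωa, hωb] at key
  exact hineq.trans key
end

section
/- Suppose the function W(t) = Φ_h(t) + Ψ(t) has a unique zero t₊ in the interval [0, χ] and a < Ω(χ) + h·χ − Ψ(χ). Then the sequence t₀ = 0, t_{n+1} = t_n + (a − Ω(χ) + Ω(χ − t_n) − t_n·h + Ψ(t_n))/(h + ω(χ − t_n)) is well defined for all n (in particular t_n < χ so the denominator is positive), monotonically increases, and converges to t₊. -/
/-!
Write `D t = h + ω (χ - t)`, which is minus the derivative of `Φ_h`. It is antitone on `[0, χ]`,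
equals `1` at `0`, and is positive on `[0, χ)`. Since `W 0 = a > 0 > W χ`, the unique zero `tstar`
lies in `(0, χ)` and `W ≥ 0` on `[0, tstar]`. As `Ψ` is nondecreasing and `D` antitone,
`W t = W t - W tstar ≤ (tstar - t) * D t` for `t ≤ tstar` (`majorant_drop_le`), so one Newton-type
step keeps the iterate in `[0, tstar]` and does not decrease it. The sequence is thus monotone and
bounded; because `D ≤ 1`, each step has length at least `W (t n)`, so `W` vanishes at the limit,
which must be `tstar`.
-/

lemma primitive_continuousOn_Icc {f F : ℝ → ℝ} {χ : ℝ} (hχ0 : 0 ≤ χ)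
    (hF : ∀ t, F t = ∫ τ in (0:ℝ)..t, f τ)
    (hf : IntervalIntegrable f MeasureTheory.volume 0 χ) :
    ContinuousOn F (Set.Icc 0 χ) := by
  have h1 := intervalIntegral.continuousOn_primitive_interval' hf Set.left_mem_uIcc
  rw [Set.uIcc_of_le hχ0] at h1
  rwa [show F = fun t => ∫ τ in (0:ℝ)..t, f τ from funext hF]

/-- The mean value estimate for the primitive of a monotone function. -/
lemma primitive_sub_bounds {f F : ℝ → ℝ} (hf : MonotoneOn f (Set.Ici 0))
    (hF : ∀ t, F t = ∫ τ in (0:ℝ)..t, f τ) {x y : ℝ} (hx : 0 ≤ x) (hxy : x ≤ y) :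
    (y - x) * f x ≤ F y - F x ∧ F y - F x ≤ (y - x) * f y := by
  have hfint : ∀ u v : ℝ, 0 ≤ u → 0 ≤ v → IntervalIntegrable f MeasureTheory.volume u v :=
    fun u v hu hv => (hf.mono fun z hz => (le_min hu hv).trans hz.1).intervalIntegrable
  have hy : 0 ≤ y := hx.trans hxy
  have hsub : F y - F x = ∫ τ in x..y, f τ := by
    rw [hF, hF, intervalIntegral.integral_interval_sub_left (hfint 0 y le_rfl hy)
      (hfint 0 x le_rfl hx)]
  have hc : ∀ c : ℝ, (y - x) * c = ∫ _τ in x..y, c := fun c => by simp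
  rw [hsub, hc, hc]
  constructor
  · exact intervalIntegral.integral_mono_on hxy (by simp) (hfint x y hx hy)
      fun z hz => hf hx (hx.trans hz.1) hz.1
  · exact intervalIntegral.integral_mono_on hxy (hfint x y hx hy) (by simp)
      fun z hz => hf (hx.trans hz.1) hy hz.2

/-- Between `s` and `u`, the function `W` drops by at most `u - s` times the value at `s` of
`h + ω (χ - ·)`, because that function is antitone and `Ψ` is nondecreasing. -/
lemma majorant_drop_le {ω ψ Ω Ψ W : ℝ → ℝ} {h a χ : ℝ}
    (hω : MonotoneOn ω (Set.Ici 0)) (hψ : MonotoneOn ψ (Set.Ici 0))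
    (hψ_nonneg : ∀ t, 0 ≤ t → 0 ≤ ψ t)
    (hΩ : ∀ t, Ω t = ∫ τ in (0:ℝ)..t, ω τ)
    (hΨ : ∀ t, Ψ t = ∫ τ in (0:ℝ)..t, ψ τ)
    (hW : ∀ t, W t = a - Ω χ + Ω (χ - t) - t * h + Ψ t)
    {s u : ℝ} (hs : 0 ≤ s) (hsu : s ≤ u) (hu : u ≤ χ) :
    W s - W u ≤ (u - s) * (h + ω (χ - s)) := by
  have h1 := (primitive_sub_bounds hω hΩ (sub_nonneg.2 hu) (sub_le_sub_left hsu χ)).2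
  have h2 := (primitive_sub_bounds hψ hΨ hs hsu).1
  have h3 : 0 ≤ (u - s) * ψ s := mul_nonneg (sub_nonneg.2 hsu) (hψ_nonneg s hs)
  rw [hW, hW]
  linarith

/-- Lemma 2: If `W(t) = Φ_h(t) + Ψ(t)` has a unique zero `tstar` in `[0, χ]` and
`a < Ω(χ) + h·χ - Ψ(χ)`, then the majorant sequence `t₀ = 0`,
`t_{n+1} = t_n + (a - Ω(χ) + Ω(χ - t_n) - t_n·h + Ψ(t_n)) / (h + ω(χ - t_n))`
is well defined (in particular `t_n < χ` and the denominator is positive),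
monotonically increases and converges to `tstar`. -/
theorem majorant_sequence_converges
    (ω ψ : ℝ → ℝ)
    (hω_cont : ContinuousOn ω (Set.Ici 0))
    (hω_mono : StrictMonoOn ω (Set.Ici 0))
    (hω_conc : ConcaveOn ℝ (Set.Ici 0) ω)
    (hω0 : ω 0 = 0)
    (hω_nonneg : ∀ t, 0 ≤ t → 0 ≤ ω t)
    (hψ_mono : MonotoneOn ψ (Set.Ici 0))
    (hψ_nonneg : ∀ t, 0 ≤ t → 0 ≤ ψ t)
    (h a χ : ℝ) (hh0 : 0 ≤ h) (hh1 : h ≤ 1) (ha : 0 < a)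
    (hχ0 : 0 ≤ χ) (hχ : ω χ = 1 - h)
    (Ω Ψ W : ℝ → ℝ)
    (hΩ : ∀ t, Ω t = ∫ τ in (0:ℝ)..t, ω τ)
    (hΨ : ∀ t, Ψ t = ∫ τ in (0:ℝ)..t, ψ τ)
    (hW : ∀ t, W t = a - Ω χ + Ω (χ - t) - t * h + Ψ t)
    (tstar : ℝ) (htstarmem : tstar ∈ Set.Icc 0 χ) (htstarzero : W tstar = 0)
    (htstaruniq : ∀ s ∈ Set.Icc 0 χ, W s = 0 → s = tstar)
    (hcond : a < Ω χ + h * χ - Ψ χ)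
    (t : ℕ → ℝ) (ht0 : t 0 = 0)
    (htrec : ∀ n, t (n + 1) =
      t n + (a - Ω χ + Ω (χ - t n) - t n * h + Ψ (t n)) / (h + ω (χ - t n))) :
    (∀ n, t n < χ) ∧ (∀ n, 0 < h + ω (χ - t n)) ∧ Monotone t ∧
      Filter.Tendsto t Filter.atTop (nhds tstar) := by
  have hΩc : ContinuousOn Ω (Set.Icc 0 χ) := primitive_continuousOn_Icc hχ0 hΩ
    (hω_cont.mono (by rw [Set.uIcc_of_le hχ0]; exact Set.Icc_subset_Ici_self)).intervalIntegrable
  have hΨc : ContinuousOn Ψ (Set.Icc 0 χ) := primitive_continuousOn_Icc hχ0 hΨ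
    (hψ_mono.mono (by rw [Set.uIcc_of_le hχ0]; exact Set.Icc_subset_Ici_self)).intervalIntegrable
  have hWc : ContinuousOn W (Set.Icc 0 χ) := by
    rw [show W = fun t => a - Ω χ + Ω (χ - t) - t * h + Ψ t from funext hW]
    have hrefl : ContinuousOn (fun t => Ω (χ - t)) (Set.Icc 0 χ) :=
      hΩc.comp (by fun_prop) fun x hx => ⟨sub_nonneg.2 hx.2, by linarith [hx.1]⟩
    exact ((continuousOn_const.add hrefl).sub (by fun_prop)).add hΨc
  have hΩ0 : Ω 0 = 0 := by simp [hΩ]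
  have hΨ0 : Ψ 0 = 0 := by simp [hΨ]
  have hW0 : W 0 = a := by simp [hW, hΨ0]
  have hWχ : W χ < 0 := by
    rw [hW, sub_self, hΩ0]
    linarith
  obtain ⟨hs0, hsχ⟩ := htstarmem
  have hslt : tstar < χ := by
    refine lt_of_le_of_ne hsχ ?_
    rintro rfl
    linarith
  -- A negative value before `tstar` would force a second zero by the intermediate value theorem.
  have hWnn : ∀ s, 0 ≤ s → s ≤ tstar → 0 ≤ W s := by
    intro s h0 h1
    by_contra! hneg
    obtain ⟨z, hz, hz0⟩ := intermediate_value_Icc' h0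
      (hWc.mono (Set.Icc_subset_Icc_right (h1.trans hsχ))) ⟨hneg.le, hW0 ▸ ha.le⟩
    have hzt := htstaruniq z ⟨hz.1, hz.2.trans (h1.trans hsχ)⟩ hz0
    have hst : s = tstar := le_antisymm h1 (hzt ▸ hz.2)
    rw [hst] at hneg
    linarith
  have hDpos : ∀ s, s ≤ tstar → 0 < h + ω (χ - s) := by
    intro s h1
    have h2 : 0 < χ - s := by linarith
    have h3 := hω_mono Set.self_mem_Ici h2.le h2
    linarith
  have hDle : ∀ s, 0 ≤ s → s ≤ tstar → h + ω (χ - s) ≤ 1 := by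
    intro s h0 h1
    have h3 := hω_mono.monotoneOn (show χ - s ∈ Set.Ici 0 from sub_nonneg.2 (h1.trans hsχ))
      hχ0 (by linarith)
    linarith
  have hrec : ∀ n, t (n + 1) = t n + W (t n) / (h + ω (χ - t n)) := fun n => by
    rw [htrec, hW]
  have hmem : ∀ n, 0 ≤ t n ∧ t n ≤ tstar := by
    intro n
    induction n with
    | zero => exact ⟨ht0.ge, ht0 ▸ hs0⟩
    | succ n ih =>
      have hD := hDpos _ ih.2
      have hdrop := majorant_drop_le hω_mono.monotoneOn hψ_mono hψ_nonneg hΩ hΨ hW ih.1 ih.2 hsχ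
      have hq0 : 0 ≤ W (t n) / (h + ω (χ - t n)) := div_nonneg (hWnn _ ih.1 ih.2) hD.le
      have hq1 : W (t n) / (h + ω (χ - t n)) ≤ tstar - t n := by
        rw [div_le_iff₀ hD]
        linarith
      rw [hrec]
      constructor <;> linarith [ih.1]
  have hstep : ∀ n, W (t n) ≤ t (n + 1) - t n := by
    intro n
    obtain ⟨h0, h1⟩ := hmem n
    rw [hrec, add_sub_cancel_left]
    exact le_div_self (hWnn _ h0 h1) (hDpos _ h1) (hDle _ h0 h1)
  have hmono : Monotone t := monotone_nat_of_le_succ fun n => by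
    linarith [hstep n, hWnn _ (hmem n).1 (hmem n).2]
  refine ⟨fun n => (hmem n).2.trans_lt hslt, fun n => hDpos _ (hmem n).2, hmono, ?_⟩
  have hlim := tendsto_atTop_ciSup hmono ⟨tstar, by rintro _ ⟨n, rfl⟩; exact (hmem n).2⟩
  set L := ⨆ n, t n
  have hL : L ∈ Set.Icc 0 χ :=
    isClosed_Icc.mem_of_tendsto hlim
      (Filter.Eventually.of_forall fun n => ⟨(hmem n).1, (hmem n).2.trans hsχ⟩)
  have hWlim : Filter.Tendsto (fun n => W (t n)) Filter.atTop (nhds (W L)) :=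
    (hWc L hL).tendsto.comp (tendsto_nhdsWithin_iff.2 ⟨hlim,
      Filter.Eventually.of_forall fun n => ⟨(hmem n).1, (hmem n).2.trans hsχ⟩⟩)
  have hdiff : Filter.Tendsto (fun n => t (n + 1) - t n) Filter.atTop (nhds 0) := by
    simpa using ((Filter.tendsto_add_atTop_iff_nat 1).2 hlim).sub hlim
  have hWL : W L = 0 := tendsto_nhds_unique hWlim
    (squeeze_zero (fun n => hWnn _ (hmem n).1 (hmem n).2) hstep hdiff)
  rwa [htstaruniq L hL hWL] at hlim
end

section
/- Suppose the function W(t) = Φ_h(t) + Ψ(t) has a unique zero t₊ in the interval [0, χ]. Then the function t ↦ t − W(t)/Φ_h'(t) = t + (a − Ω(χ) + Ω(χ − t) − t·h + Ψ(t))/(h + ω(χ − t)) is nondecreasing on the interval [0, t₊). -/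
/-!
Write `D u = h + ω (χ - u) = -Φ_h'(u)`. It is nonincreasing and positive on `[0, χ)`. The function
`W` is continuous with `W 0 = a > 0`, so it is nonnegative before its only zero `tstar`. For `s ≤ t`
in `[0, tstar)`, the bound `ω ≤ ω (χ - s)` on `[χ - t, χ - s]` and `ψ ≥ 0` give
`W t ≥ W s - (t - s) * D s`. Therefore
`t + W t / D t ≥ t + W t / D s ≥ s + W s / D s`.
-/

/-- The primitive from `0` of a function monotone on `[0, ∞)` is continuous on every `[0, c]`. -/
lemma continuousOn_primitive_of_monotoneOn {f : ℝ → ℝ} (hf : MonotoneOn f (Set.Ici 0))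
    {c : ℝ} (hc : 0 ≤ c) : ContinuousOn (fun t => ∫ τ in (0:ℝ)..t, f τ) (Set.Icc 0 c) := by
  have hi : IntervalIntegrable f MeasureTheory.volume 0 c := by
    apply MonotoneOn.intervalIntegrable
    rw [Set.uIcc_of_le hc]
    exact hf.mono Set.Icc_subset_Ici_self
  have := intervalIntegral.continuousOn_primitive_interval' hi Set.left_mem_uIcc
  rwa [Set.uIcc_of_le hc] at this

/-- The increment over `[x, y]` of the primitive from `0` of a monotone `f` is between
`(y - x) * f x` and `(y - x) * f y`. -/
lemma primitive_sub_bounds_of_monotoneOn {f : ℝ → ℝ} (hf : MonotoneOn f (Set.Ici 0))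
    {x y : ℝ} (hx : 0 ≤ x) (hxy : x ≤ y) :
    (y - x) * f x ≤ (∫ τ in (0:ℝ)..y, f τ) - ∫ τ in (0:ℝ)..x, f τ ∧
      (∫ τ in (0:ℝ)..y, f τ) - ∫ τ in (0:ℝ)..x, f τ ≤ (y - x) * f y := by
  have hi : ∀ u v : ℝ, 0 ≤ u → u ≤ v → IntervalIntegrable f MeasureTheory.volume u v := by
    intro u v hu huv
    apply MonotoneOn.intervalIntegrable
    rw [Set.uIcc_of_le huv]
    exact hf.mono fun z hz => hu.trans hz.1
  rw [intervalIntegral.integral_interval_sub_left (hi 0 y le_rfl (hx.trans hxy)) (hi 0 x le_rfl hx)]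
  have hconst : ∀ c : ℝ, (y - x) * c = ∫ _ in x..y, c := by simp
  rw [hconst, hconst]
  constructor
  · exact intervalIntegral.integral_mono_on hxy (by simp) (hi x y hx hxy)
      fun z hz => hf hx (hx.trans hz.1) hz.1
  · exact intervalIntegral.integral_mono_on hxy (hi x y hx hxy) (by simp)
      fun z hz => hf (hx.trans hz.1) (hx.trans hxy) hz.2

/-- If `W(t) = Φ_h(t) + Ψ(t)` has a unique zero `tstar` in `[0, χ]`, then the
function `t ↦ t - W(t)/Φ_h'(t) = t + (a - Ω(χ) + Ω(χ - t) - t·h + Ψ(t)) / (h + ω(χ - t))`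
is nondecreasing on `[0, tstar)`. -/
theorem newton_majorant_map_monotone
    (ω ψ : ℝ → ℝ)
    (hω_cont : ContinuousOn ω (Set.Ici 0))
    (hω_mono : StrictMonoOn ω (Set.Ici 0))
    (hω_conc : ConcaveOn ℝ (Set.Ici 0) ω)
    (hω0 : ω 0 = 0)
    (hω_nonneg : ∀ t, 0 ≤ t → 0 ≤ ω t)
    (hψ_mono : MonotoneOn ψ (Set.Ici 0))
    (hψ_nonneg : ∀ t, 0 ≤ t → 0 ≤ ψ t)
    (h a χ : ℝ) (hh0 : 0 ≤ h) (hh1 : h ≤ 1) (ha : 0 < a)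
    (hχ0 : 0 ≤ χ) (hχ : ω χ = 1 - h)
    (Ω Ψ W : ℝ → ℝ)
    (hΩ : ∀ t, Ω t = ∫ τ in (0:ℝ)..t, ω τ)
    (hΨ : ∀ t, Ψ t = ∫ τ in (0:ℝ)..t, ψ τ)
    (hW : ∀ t, W t = a - Ω χ + Ω (χ - t) - t * h + Ψ t)
    (tstar : ℝ) (htstar_mem : tstar ∈ Set.Icc 0 χ) (htstar_zero : W tstar = 0)
    (htstar_uniq : ∀ s ∈ Set.Icc 0 χ, W s = 0 → s = tstar) :
    MonotoneOn (fun s => s + (a - Ω χ + Ω (χ - s) - s * h + Ψ s) / (h + ω (χ - s)))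
      (Set.Ico 0 tstar) := by
  have hmono : MonotoneOn ω (Set.Ici 0) := hω_mono.monotoneOn
  have hWcont : ContinuousOn W (Set.Icc 0 χ) := by
    have hΩc : ContinuousOn Ω (Set.Icc 0 χ) := by
      rw [funext hΩ]
      exact continuousOn_primitive_of_monotoneOn hmono hχ0
    have hΨc : ContinuousOn Ψ (Set.Icc 0 χ) := by
      rw [funext hΨ]
      exact continuousOn_primitive_of_monotoneOn hψ_mono hχ0
    have hΩr : ContinuousOn (fun t => Ω (χ - t)) (Set.Icc 0 χ) :=
      hΩc.comp (by fun_prop) fun t ht => ⟨by linarith [ht.2], by linarith [ht.1]⟩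
    rw [funext hW]
    exact ((continuousOn_const.add hΩr).sub (by fun_prop)).add hΨc
  have hW0 : W 0 = a := by simp [hW, hΨ]
  rintro s ⟨hs0, -⟩ t ⟨ht0, htstar⟩ hst
  have htχ : t < χ := htstar.trans_le htstar_mem.2
  have hWt : 0 ≤ W t := by
    by_contra! hneg
    -- A sign change on `[0, t]` would produce a zero of `W` smaller than `tstar`.
    obtain ⟨u, hu, hu0⟩ := intermediate_value_Icc' ht0
      (hWcont.mono (Set.Icc_subset_Icc_right htχ.le)) ⟨hneg.le, hW0.symm ▸ ha.le⟩
    have := htstar_uniq u ⟨hu.1, hu.2.trans htχ.le⟩ hu0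
    linarith [hu.2]
  have hDt : 0 < h + ω (χ - t) := by
    have := hω_mono (Set.mem_Ici.2 le_rfl) (Set.mem_Ici.2 (sub_pos.2 htχ).le) (sub_pos.2 htχ)
    linarith
  have hDle : h + ω (χ - t) ≤ h + ω (χ - s) := by
    have := hmono (Set.mem_Ici.2 (sub_pos.2 htχ).le)
      (Set.mem_Ici.2 (by linarith : (0:ℝ) ≤ χ - s)) (by linarith)
    linarith
  have hDs : 0 < h + ω (χ - s) := hDt.trans_le hDle
  have hdrop : W s - (t - s) * (h + ω (χ - s)) ≤ W t := by
    have h1 := (primitive_sub_bounds_of_monotoneOn hmono (sub_pos.2 htχ).le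
      (by linarith : χ - t ≤ χ - s)).2
    have h2 := (primitive_sub_bounds_of_monotoneOn hψ_mono hs0 hst).1
    rw [← hΩ, ← hΩ] at h1
    rw [← hΨ, ← hΨ] at h2
    have h3 := mul_nonneg (sub_nonneg.2 hst) (hψ_nonneg s hs0)
    rw [hW, hW]
    linarith
  simp only [← hW]
  have e1 : W t / (h + ω (χ - s)) ≤ W t / (h + ω (χ - t)) :=
    div_le_div_of_nonneg_left hWt hDt hDle
  have e2 : W s / (h + ω (χ - s)) - (t - s) ≤ W t / (h + ω (χ - s)) := by
    rw [le_div_iff₀ hDs, sub_mul, div_mul_cancel₀ _ hDs.ne']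
    exact hdrop
  linarith
end

section
/- Suppose the function W(t) = Φ_h(t) + Ψ(t) has a unique zero t₊ in the interval [0, χ]. Define ρ₀ = 0 and ρ_{n+1} = d(ρ_n), where d(t) = t + W(t). Then ρ_n ≤ t₊ for all n, the sequence {ρ_n} is monotonically nondecreasing, and it converges to t₊. -/
/-!
The map `d(t) = t + W(t)` is nondecreasing on `[0, χ]`: for `s ≤ t`,
`d(t) - d(s) = (t - s)(1 - h) - ∫_{χ-t}^{χ-s} ω + ∫_s^t ψ`, where `ω ≤ ω(χ) = 1 - h` on `[0, χ]` and
`ψ ≥ 0`. As `tstar` is a fixed point of `d`, the interval `[0, tstar]` is mapped below `tstar`.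
Since `W` is continuous with `W(0) = a > 0` and has no zero before `tstar`, it is nonnegative on
`[0, tstar]`. Hence `ρ` stays in `[0, tstar]` and is nondecreasing, and its limit is a zero of `W`
by continuity, so it equals `tstar`.
-/

/-- If `W(t) = Φ_h(t) + Ψ(t)` has a unique zero `tstar` in `[0, χ]`, and
`ρ₀ = 0`, `ρ_{n+1} = d(ρ_n)` with `d(t) = t + W(t)`, then `ρ_n ≤ tstar` for all `n`,
the sequence `{ρ_n}` is monotonically nondecreasing, and it converges to `tstar`. -/
theorem rho_sequence_converges
    (ω ψ : ℝ → ℝ)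
    (hω_cont : ContinuousOn ω (Set.Ici 0))
    (hω_mono : StrictMonoOn ω (Set.Ici 0))
    (hω_conc : ConcaveOn ℝ (Set.Ici 0) ω)
    (hω0 : ω 0 = 0)
    (hω_nonneg : ∀ t, 0 ≤ t → 0 ≤ ω t)
    (hψ_mono : MonotoneOn ψ (Set.Ici 0))
    (hψ_nonneg : ∀ t, 0 ≤ t → 0 ≤ ψ t)
    (h a χ : ℝ) (hh0 : 0 ≤ h) (hh1 : h ≤ 1) (ha : 0 < a)
    (hχ0 : 0 ≤ χ) (hχ : ω χ = 1 - h)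
    (Ω Ψ W : ℝ → ℝ)
    (hΩ : ∀ t, Ω t = ∫ τ in (0:ℝ)..t, ω τ)
    (hΨ : ∀ t, Ψ t = ∫ τ in (0:ℝ)..t, ψ τ)
    (hW : ∀ t, W t = a - Ω χ + Ω (χ - t) - t * h + Ψ t)
    (tstar : ℝ) (htstar_mem : tstar ∈ Set.Icc 0 χ) (htstar_zero : W tstar = 0)
    (htstar_uniq : ∀ s ∈ Set.Icc 0 χ, W s = 0 → s = tstar)
    (ρ : ℕ → ℝ) (hρ0 : ρ 0 = 0)
    (hρrec : ∀ n, ρ (n + 1) = ρ n + W (ρ n)) :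
    (∀ n, ρ n ≤ tstar) ∧ Monotone ρ ∧
      Filter.Tendsto ρ Filter.atTop (nhds tstar) := by
  obtain ⟨ht0, htχ⟩ := htstar_mem
  have iω : ∀ x y, 0 ≤ x → 0 ≤ y → IntervalIntegrable ω MeasureTheory.volume x y := by
    intro x y hx hy
    refine (hω_mono.monotoneOn.mono fun z hz => ?_).intervalIntegrable
    exact (le_min hx hy).trans hz.1
  have iψ : ∀ x y, 0 ≤ x → 0 ≤ y → IntervalIntegrable ψ MeasureTheory.volume x y := by
    intro x y hx hy
    refine (hψ_mono.mono fun z hz => ?_).intervalIntegrable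
    exact (le_min hx hy).trans hz.1
  have cΩ : ContinuousOn Ω (Set.Icc 0 χ) := by
    have := intervalIntegral.continuousOn_primitive_interval' (iω 0 χ le_rfl hχ0)
      (Set.left_mem_uIcc)
    rw [Set.uIcc_of_le hχ0] at this
    exact this.congr fun t _ => hΩ t
  have cΨ : ContinuousOn Ψ (Set.Icc 0 χ) := by
    have := intervalIntegral.continuousOn_primitive_interval' (iψ 0 χ le_rfl hχ0)
      (Set.left_mem_uIcc)
    rw [Set.uIcc_of_le hχ0] at this
    exact this.congr fun t _ => hΨ t
  have cW : ContinuousOn W (Set.Icc 0 χ) := by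
    have c1 : ContinuousOn (fun t => Ω (χ - t)) (Set.Icc 0 χ) := by
      refine cΩ.comp (by fun_prop) fun t ht => ?_
      exact ⟨by linarith [ht.2], by linarith [ht.1]⟩
    have c2 : ContinuousOn (fun t => a - Ω χ + Ω (χ - t) - t * h + Ψ t) (Set.Icc 0 χ) :=
      ((continuousOn_const.add c1).sub (by fun_prop)).add cΨ
    exact c2.congr fun t _ => hW t
  have hd : ∀ s t, 0 ≤ s → s ≤ t → t ≤ χ → s + W s ≤ t + W t := by
    intro s t hs hst htc
    have e1 : Ω (χ - s) - Ω (χ - t) = ∫ τ in (χ - t)..(χ - s), ω τ := by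
      rw [hΩ, hΩ]
      exact intervalIntegral.integral_interval_sub_left (iω _ _ le_rfl (by linarith))
        (iω _ _ le_rfl (by linarith))
    have e2 : Ψ t - Ψ s = ∫ τ in s..t, ψ τ := by
      rw [hΨ, hΨ]
      exact intervalIntegral.integral_interval_sub_left (iψ _ _ le_rfl (by linarith))
        (iψ _ _ le_rfl (by linarith))
    have b1 : ∫ τ in (χ - t)..(χ - s), ω τ ≤ ∫ τ in (χ - t)..(χ - s), (1 - h) := by
      refine intervalIntegral.integral_mono_on (by linarith)
        (iω _ _ (by linarith) (by linarith)) intervalIntegrable_const fun x hx => ?_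
      rw [← hχ]
      exact hω_mono.monotoneOn (Set.mem_Ici.2 (by linarith [hx.1])) (Set.mem_Ici.2 hχ0)
        (by linarith [hx.2])
    have b2 : 0 ≤ ∫ τ in s..t, ψ τ :=
      intervalIntegral.integral_nonneg hst fun x hx => hψ_nonneg x (hs.trans hx.1)
    rw [intervalIntegral.integral_const, smul_eq_mul] at b1
    rw [hW, hW]
    linarith
  have hW0 : W 0 = a := by
    rw [hW, hΨ]
    simp
  have hWnn : ∀ s, 0 ≤ s → s ≤ tstar → 0 ≤ W s := by
    intro s hs hst
    by_contra! hneg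
    -- A sign change on `[0, s]` would produce a zero there, forcing `s = tstar`.
    obtain ⟨z, hz, hz0⟩ := intermediate_value_Icc' hs
      (cW.mono (Set.Icc_subset_Icc_right (hst.trans htχ))) ⟨hneg.le, hW0 ▸ ha.le⟩
    have hzt := htstar_uniq z ⟨hz.1, hz.2.trans (hst.trans htχ)⟩ hz0
    have : s = tstar := le_antisymm hst (hzt ▸ hz.2)
    rw [this, htstar_zero] at hneg
    exact lt_irrefl _ hneg
  have hmem : ∀ n, 0 ≤ ρ n ∧ ρ n ≤ tstar := by
    intro n
    induction n with
    | zero => rw [hρ0]; exact ⟨le_rfl, ht0⟩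
    | succ n ih =>
      rw [hρrec]
      have := hd _ _ ih.1 ih.2 htχ
      rw [htstar_zero] at this
      exact ⟨add_nonneg ih.1 (hWnn _ ih.1 ih.2), by linarith⟩
  have hmono : Monotone ρ := monotone_nat_of_le_succ fun n => by
    rw [hρrec]
    linarith [hWnn _ (hmem n).1 (hmem n).2]
  refine ⟨fun n => (hmem n).2, hmono, ?_⟩
  have hbdd : BddAbove (Set.range ρ) := ⟨tstar, by rintro _ ⟨n, rfl⟩; exact (hmem n).2⟩
  have hlim := tendsto_atTop_ciSup hmono hbdd
  set L := ⨆ n, ρ n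
  have hL0 : 0 ≤ L := ge_of_tendsto' hlim fun n => (hmem n).1
  have hLχ : L ≤ χ := le_of_tendsto' hlim fun n => (hmem n).2.trans htχ
  have hWlim : Filter.Tendsto (fun n => W (ρ n)) Filter.atTop (nhds (W L)) :=
    (cW L ⟨hL0, hLχ⟩).tendsto.comp (tendsto_nhdsWithin_iff.2
      ⟨hlim, Filter.Eventually.of_forall fun n => ⟨(hmem n).1, (hmem n).2.trans htχ⟩⟩)
  have hfix : L + W L = L := by
    refine tendsto_nhds_unique (hlim.add hWlim) ?_
    simpa only [← hρrec, Function.comp_def] using hlim.comp (Filter.tendsto_add_atTop_nat 1)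
  rw [← htstar_uniq L ⟨hL0, hLχ⟩ (by linarith)]
  exact hlim
end

section
/- Let f be ω-regularly smooth on D with constant h and f'(x₀) = I, let g satisfy ‖g(x'') − g(x')‖ ≤ ψ(t)‖x'' − x'‖ for all x', x'' ∈ B̄(x₀, t) ⊆ D with ψ nondecreasing, let ‖f(x₀) + g(x₀)‖ ≤ a, suppose W(t) = Φ_h(t) + Ψ(t) has a unique zero t₊ in [0, χ], and suppose B̄(x₀, t₊) ⊆ D. Define the simplified iteration u₀ = x₀, u_{n+1} = u_n − (f(u_n) + g(u_n)), and the scalar sequence ρ₀ = 0, ρ_{n+1} = ρ_n + W(ρ_n). Then for all n: ‖u_{n+1} − u_n‖ ≤ ρ_{n+1} − ρ_n. -/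
/-!
Put `T x = x - (f x + g x)`, so that `u (n + 1) = T (u n)`, and let
`k t = 1 - h - ω (χ - t) + ψ t`. The proof rests on two facts.

* On the ball of radius `t ≤ tstar` about `x₀` the map `T` is Lipschitz with constant `k t`
  (`norm_deriv_sub_id_le` and the mean value inequality give the contribution of `f`).
* `t + W t = a + ∫ τ in 0..t, k τ`, with `k` nonnegative and nondecreasing on `[0, χ]`. Hence
  `t ↦ t + W t` is nondecreasing and fixes `tstar`, so the `ρ n` increase and stay below `tstar`.

The crude bound `k (ρ (n + 1)) * ‖u (n + 1) - u n‖` is too weak for the induction. Since the point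
at parameter `θ` of the segment from `u n` to `u (n + 1)` lies in the ball of radius
`ρ n + θ (ρ (n + 1) - ρ n)`, the Lipschitz estimate can be summed over a fine subdivision of the
segment, and in the limit (`norm_sub_le_integral_of_local_lipschitz`)
`‖T (u (n + 1)) - T (u n)‖ ≤ ∫ τ in ρ n..ρ (n + 1), k τ = ρ (n + 2) - ρ (n + 1)`.
-/

/-- A path whose increments on `[s, t]` are at most `k t * (t - s)`, `k` nondecreasing, moves by at
most `∫ k`. For the subdivision into `N` equal parts, the upper Riemann sum of `k` exceeds the
integral by at most `(k 1 - k 0) / N`; no continuity of `k` is needed. -/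
theorem norm_sub_le_integral_of_local_lipschitz {X : Type*} [NormedAddCommGroup X]
    (G : ℝ → X) (k : ℝ → ℝ) (hk : MonotoneOn k (Set.Icc 0 1))
    (hG : ∀ s t, 0 ≤ s → s ≤ t → t ≤ 1 → ‖G t - G s‖ ≤ k t * (t - s)) :
    ‖G 1 - G 0‖ ≤ ∫ τ in (0:ℝ)..1, k τ := by
  have key : ∀ n : ℕ, ‖G 1 - G 0‖ ≤
      (∫ τ in (0:ℝ)..1, k τ) + (k 1 - k 0) * (1 / ((n:ℝ) + 1)) := by
    intro n
    set N : ℝ := (n:ℝ) + 1 with hN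
    have hNpos : 0 < N := by positivity
    have hcast : ((n + 1 : ℕ) : ℝ) = N := by push_cast; rfl
    have htel : ∑ i ∈ Finset.range (n + 1), (G (((i + 1 : ℕ) : ℝ) / N) - G ((i : ℝ) / N))
        = G 1 - G 0 := by
      rw [Finset.sum_range_sub (fun i : ℕ => G ((i : ℝ) / N)), hcast, div_self hNpos.ne']
      simp
    have hshift : ∑ i ∈ Finset.range (n + 1), k (((i + 1 : ℕ) : ℝ) / N)
        = ∑ i ∈ Finset.range (n + 1), k ((i : ℝ) / N) + (k 1 - k 0) := by
      have h1 := Finset.sum_range_sub (fun i : ℕ => k ((i : ℝ) / N)) (n + 1)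
      rw [Finset.sum_sub_distrib, hcast, div_self hNpos.ne'] at h1
      simp only [Nat.cast_zero, zero_div] at h1
      linarith
    have hlow : ∑ i ∈ Finset.range (n + 1), k ((i : ℝ) / N) ≤ N * ∫ τ in (0:ℝ)..1, k τ := by
      have hm : MonotoneOn (fun x => k (x / N)) (Set.Icc (0:ℝ) (0 + ((n + 1 : ℕ) : ℝ))) := by
        rw [hcast, zero_add]
        intro x hx y hy hxy
        refine hk ⟨by have := hx.1; positivity, (div_le_one hNpos).2 hx.2⟩
          ⟨by have := hy.1; positivity, (div_le_one hNpos).2 hy.2⟩ ?_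
        gcongr
      have h2 := hm.sum_le_integral
      rw [hcast, intervalIntegral.integral_comp_div _ hNpos.ne'] at h2
      simpa [div_self hNpos.ne'] using h2
    calc ‖G 1 - G 0‖
        = ‖∑ i ∈ Finset.range (n + 1), (G (((i + 1 : ℕ) : ℝ) / N) - G ((i : ℝ) / N))‖ := by
          rw [htel]
      _ ≤ ∑ i ∈ Finset.range (n + 1), k (((i + 1 : ℕ) : ℝ) / N) * (1 / N) := by
          refine norm_sum_le_of_le _ fun i hi => ?_
          have hi' : ((i + 1 : ℕ) : ℝ) ≤ N := by
            rw [← hcast]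
            exact_mod_cast Finset.mem_range.1 hi
          have h3 := hG ((i : ℝ) / N) (((i + 1 : ℕ) : ℝ) / N) (by positivity)
            (by gcongr; simp) ((div_le_one hNpos).2 hi')
          have h4 : ((i + 1 : ℕ) : ℝ) / N - (i : ℝ) / N = 1 / N := by
            push_cast
            ring
          rwa [h4] at h3
      _ = (∑ i ∈ Finset.range (n + 1), k ((i : ℝ) / N) + (k 1 - k 0)) * (1 / N) := by
          rw [← Finset.sum_mul, hshift]
      _ ≤ (N * (∫ τ in (0:ℝ)..1, k τ) + (k 1 - k 0)) * (1 / N) := by gcongr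
      _ = _ := by field_simp
  have hlim : Filter.Tendsto
      (fun n : ℕ => (∫ τ in (0:ℝ)..1, k τ) + (k 1 - k 0) * (1 / ((n:ℝ) + 1)))
      Filter.atTop (nhds ((∫ τ in (0:ℝ)..1, k τ) + (k 1 - k 0) * 0)) :=
    (tendsto_one_div_add_atTop_nhds_zero_nat.const_mul _).const_add _
  simpa using ge_of_tendsto' hlim key

/-- Concavity: the increments of `ω` over steps of length `t` are nonincreasing. -/
theorem concave_increment_le {ω : ℝ → ℝ} (hω : ConcaveOn ℝ (Set.Ici 0) ω)
    {p q t : ℝ} (hp : 0 ≤ p) (hpq : p ≤ q) (ht : 0 ≤ t) :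
    ω (q + t) - ω q ≤ ω (p + t) - ω p := by
  rcases eq_or_lt_of_le (show 0 ≤ q + t - p by linarith) with h0 | hL
  · have h1 : q = p := by linarith
    rw [h1]
  -- `p + t` and `q` are complementary convex combinations of `p` and `q + t`.
  have hmem : q + t ∈ Set.Ici (0:ℝ) := by
    simp only [Set.mem_Ici]
    linarith
  have hα : 0 ≤ (q - p) / (q + t - p) := div_nonneg (by linarith) hL.le
  have hβ : 0 ≤ t / (q + t - p) := div_nonneg ht hL.le
  have hne := hL.ne'
  have hsum : (q - p) / (q + t - p) + t / (q + t - p) = 1 := by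
    field_simp
    ring
  have h1 := hω.2 (Set.mem_Ici.2 hp) hmem hα hβ hsum
  have h2 := hω.2 (Set.mem_Ici.2 hp) hmem hβ hα (by rw [add_comm]; exact hsum)
  simp only [smul_eq_mul] at h1 h2
  have e1 : (q - p) / (q + t - p) * p + t / (q + t - p) * (q + t) = p + t := by
    field_simp
    ring
  have e2 : t / (q + t - p) * p + (q - p) / (q + t - p) * (q + t) = q := by
    field_simp
    ring
  rw [e1] at h1
  rw [e2] at h2
  have e3 : t / (q + t - p) = 1 - (q - p) / (q + t - p) := by linarith
  rw [e3] at h1 h2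
  linarith

/-- Regular smoothness between `x₀`, where the derivative is the identity, and a point at distance
at most `t` with derivative `A`. -/
theorem norm_deriv_sub_id_le {X : Type*} [NormedAddCommGroup X] [NormedSpace ℝ X]
    {ω ωinv : ℝ → ℝ} (hω_mono : StrictMonoOn ω (Set.Ici 0))
    (hω_conc : ConcaveOn ℝ (Set.Ici 0) ω)
    (hωinv_right : ∀ s, 0 ≤ s → 0 ≤ ωinv s ∧ ω (ωinv s) = s)
    {h : ℝ} (hh1 : h ≤ 1) (A : X →L[ℝ] X) (hA : h ≤ ‖A‖) {d t : ℝ} (ht0 : 0 ≤ t)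
    (hreg : ωinv (min ‖ContinuousLinearMap.id ℝ X‖ ‖A‖ - h + ‖A - ContinuousLinearMap.id ℝ X‖)
        - ωinv (min ‖ContinuousLinearMap.id ℝ X‖ ‖A‖ - h) ≤ d)
    (hd : d ≤ t) (htχ : t ≤ ωinv (1 - h)) :
    ‖A - ContinuousLinearMap.id ℝ X‖ ≤ 1 - h - ω (ωinv (1 - h) - t) := by
  obtain ⟨hχ0, hχ⟩ := hωinv_right (1 - h) (by linarith)
  rcases subsingleton_or_nontrivial X with hX | hX
  · -- In the zero space the identity has norm `0`, not `1`, and the claim is monotonicity of `ω`.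
    have h0 : A - ContinuousLinearMap.id ℝ X = 0 := Subsingleton.elim _ _
    have h1 := hω_mono.monotoneOn (show ωinv (1 - h) - t ∈ Set.Ici (0:ℝ) by
      simp only [Set.mem_Ici]; linarith) (Set.mem_Ici.2 hχ0)
      (show ωinv (1 - h) - t ≤ ωinv (1 - h) by linarith)
    rw [h0, norm_zero]
    linarith
  have hid : ‖ContinuousLinearMap.id ℝ X‖ = 1 := ContinuousLinearMap.norm_id
  have hδ : 1 - ‖A - ContinuousLinearMap.id ℝ X‖ ≤ min 1 ‖A‖ := by
    refine le_min (by linarith [norm_nonneg (A - ContinuousLinearMap.id ℝ X)]) ?_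
    have h1 := norm_sub_norm_le (ContinuousLinearMap.id ℝ X) A
    rw [hid, norm_sub_rev] at h1
    linarith
  rw [hid] at hreg
  set δ := ‖A - ContinuousLinearMap.id ℝ X‖ with hδdef
  have hδ0 : 0 ≤ δ := norm_nonneg _
  set m := min 1 ‖A‖ - h with hm
  have hm0 : 0 ≤ m := by
    have := le_min hh1 hA
    linarith
  obtain ⟨hp0, hp⟩ := hωinv_right m hm0
  obtain ⟨hq0, hq⟩ := hωinv_right (m + δ) (by linarith)
  set p := ωinv m
  set q := ωinv (m + δ)
  set χ := ωinv (1 - h)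
  -- `m + δ ≥ 1 - h` says `χ ≤ q`, which with `q ≤ p + t` locates `p`.
  have hχq : χ ≤ q := by
    by_contra hlt
    have := hω_mono (Set.mem_Ici.2 hq0) (Set.mem_Ici.2 hχ0) (not_le.1 hlt)
    linarith
  have hqp : ω q ≤ ω (p + t) :=
    hω_mono.monotoneOn (Set.mem_Ici.2 hq0) (by simp only [Set.mem_Ici]; linarith) (by linarith)
  have hinc := concave_increment_le hω_conc (p := χ - t) (q := p) (t := t)
    (by linarith) (by linarith) ht0
  rw [sub_add_cancel] at hinc
  linarith

/-- For the simplified iteration `u₀ = x₀`, `u_{n+1} = u_n - (f(u_n) + g(u_n))`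
and the scalar sequence `ρ₀ = 0`, `ρ_{n+1} = ρ_n + W(ρ_n)`, one has
`‖u_{n+1} - u_n‖ ≤ ρ_{n+1} - ρ_n` for all `n`. -/
theorem simplified_iteration_majorized
    {X : Type*} [NormedAddCommGroup X] [NormedSpace ℝ X] [CompleteSpace X]
    (D : Set X) (hD : Convex ℝ D) (x₀ : X) (hx₀ : x₀ ∈ D)
    (f g : X → X) (f' : X → X →L[ℝ] X)
    (hf : ∀ x ∈ D, HasFDerivWithinAt f (f' x) D x)
    (hfx₀ : f' x₀ = ContinuousLinearMap.id ℝ X)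
    (ω ωinv ψ : ℝ → ℝ)
    (hω_cont : ContinuousOn ω (Set.Ici 0))
    (hω_mono : StrictMonoOn ω (Set.Ici 0))
    (hω_conc : ConcaveOn ℝ (Set.Ici 0) ω)
    (hω0 : ω 0 = 0)
    (hω_nonneg : ∀ t, 0 ≤ t → 0 ≤ ω t)
    (hωinv_left : ∀ t, 0 ≤ t → ωinv (ω t) = t)
    (hωinv_right : ∀ s, 0 ≤ s → 0 ≤ ωinv s ∧ ω (ωinv s) = s)
    (h : ℝ) (hh0 : 0 ≤ h) (hh1 : h ≤ 1) (hhf : ∀ x ∈ D, h ≤ ‖f' x‖)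
    (hreg : ∀ x' ∈ D, ∀ x'' ∈ D,
      ωinv (min ‖f' x'‖ ‖f' x''‖ - h + ‖f' x'' - f' x'‖)
        - ωinv (min ‖f' x'‖ ‖f' x''‖ - h) ≤ ‖x'' - x'‖)
    (hψ_mono : MonotoneOn ψ (Set.Ici 0))
    (hψ_nonneg : ∀ t, 0 ≤ t → 0 ≤ ψ t)
    (hg : ∀ t, 0 ≤ t → Metric.closedBall x₀ t ⊆ D →
      ∀ x' ∈ Metric.closedBall x₀ t, ∀ x'' ∈ Metric.closedBall x₀ t,
        ‖g x'' - g x'‖ ≤ ψ t * ‖x'' - x'‖)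
    (a : ℝ) (ha_pos : 0 < a) (ha : ‖f x₀ + g x₀‖ ≤ a)
    (χ : ℝ) (hχdef : χ = ωinv (1 - h))
    (Ω Ψ W : ℝ → ℝ)
    (hΩ : ∀ t, Ω t = ∫ τ in (0:ℝ)..t, ω τ)
    (hΨ : ∀ t, Ψ t = ∫ τ in (0:ℝ)..t, ψ τ)
    (hW : ∀ t, W t = a - Ω χ + Ω (χ - t) - t * h + Ψ t)
    (tstar : ℝ) (htstar_mem : tstar ∈ Set.Icc 0 χ) (htstar_zero : W tstar = 0)
    (htstar_uniq : ∀ s ∈ Set.Icc 0 χ, W s = 0 → s = tstar)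
    (hball : Metric.closedBall x₀ tstar ⊆ D)
    (u : ℕ → X) (hu0 : u 0 = x₀)
    (hurec : ∀ n, u (n + 1) = u n - (f (u n) + g (u n)))
    (ρ : ℕ → ℝ) (hρ0 : ρ 0 = 0)
    (hρrec : ∀ n, ρ (n + 1) = ρ n + W (ρ n)) :
    ∀ n, ‖u (n + 1) - u n‖ ≤ ρ (n + 1) - ρ n := by
  obtain ⟨hχ0, hχ⟩ := hωinv_right (1 - h) (by linarith)
  rw [← hχdef] at hχ0 hχ
  obtain ⟨hts0, htsχ⟩ := htstar_mem
  set k : ℝ → ℝ := fun t => (1 - h - ω (χ - t)) + ψ t with hkdef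
  have hω_le : ∀ t, 0 ≤ t → t ≤ χ → ω (χ - t) ≤ 1 - h := fun t h0 h1 => by
    rw [← hχ]
    exact hω_mono.monotoneOn (by simp only [Set.mem_Ici]; linarith) (Set.mem_Ici.2 hχ0)
      (by linarith)
  have hk_nonneg : ∀ t, 0 ≤ t → t ≤ χ → 0 ≤ k t := fun t h0 h1 => by
    have := hω_le t h0 h1
    have := hψ_nonneg t h0
    simp only [hkdef]
    linarith
  have hωχ_anti : AntitoneOn (fun t => ω (χ - t)) (Set.Icc 0 χ) := fun s hs t ht hst =>
    hω_mono.monotoneOn (by simp only [Set.mem_Ici]; linarith [ht.2])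
      (by simp only [Set.mem_Ici]; linarith [hs.2]) (by linarith)
  have hk_mono : MonotoneOn k (Set.Icc 0 χ) := fun s hs t ht hst => by
    have h1 := hωχ_anti hs ht hst
    have h2 := hψ_mono (Set.mem_Ici.2 hs.1) (Set.mem_Ici.2 ht.1) hst
    simp only [hkdef] at h1 ⊢
    linarith
  have hk_int : ∀ s t, 0 ≤ s → s ≤ t → t ≤ χ →
      IntervalIntegrable k MeasureTheory.volume s t := fun s t h0 h1 h2 =>
    MonotoneOn.intervalIntegrable (hk_mono.mono (by
      rw [Set.uIcc_of_le h1]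
      exact Set.Icc_subset_Icc h0 h2))
  have hWk : ∀ t, 0 ≤ t → t ≤ χ → t + W t = a + ∫ τ in (0:ℝ)..t, k τ := by
    intro t h0 h1
    have hsub : Set.uIcc 0 t ⊆ Set.Icc 0 χ := by
      rw [Set.uIcc_of_le h0]
      exact Set.Icc_subset_Icc le_rfl h1
    have i1 : IntervalIntegrable (fun τ => ω (χ - τ)) MeasureTheory.volume 0 t :=
      (hωχ_anti.mono hsub).intervalIntegrable
    have i2 : IntervalIntegrable ψ MeasureTheory.volume 0 t :=
      (hψ_mono.mono (fun x hx => (hsub hx).1)).intervalIntegrable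
    have hωi : ∀ c d, 0 ≤ c → 0 ≤ d → IntervalIntegrable ω MeasureTheory.volume c d :=
      fun c d hc hd => (hω_mono.monotoneOn.mono (fun x hx =>
        le_trans (le_min hc hd) hx.1)).intervalIntegrable
    have e1 : ∫ τ in (0:ℝ)..t, ω (χ - τ) = Ω χ - Ω (χ - t) := by
      rw [intervalIntegral.integral_comp_sub_left (fun x => ω x) χ, sub_zero, hΩ, hΩ,
        intervalIntegral.integral_interval_sub_left (hωi _ _ le_rfl hχ0)
          (hωi _ _ le_rfl (by linarith))]
    simp only [hkdef]
    rw [intervalIntegral.integral_add (by exact (intervalIntegrable_const).sub i1) i2,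
      intervalIntegral.integral_sub intervalIntegrable_const i1, e1,
      intervalIntegral.integral_const, hW, hΨ]
    simp only [smul_eq_mul]
    ring
  have hWdiff : ∀ s t, 0 ≤ s → s ≤ t → t ≤ χ →
      (t + W t) - (s + W s) = ∫ τ in s..t, k τ := by
    intro s t h0 h1 h2
    rw [hWk t (h0.trans h1) h2, hWk s h0 (h1.trans h2), add_sub_add_left_eq_sub,
      intervalIntegral.integral_interval_sub_left (hk_int 0 t le_rfl (h0.trans h1) h2)
        (hk_int 0 s le_rfl h0 (h1.trans h2))]
  have hW0 : W 0 = a := by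
    have := hWk 0 le_rfl hχ0
    simpa using this
  have hWcont : ContinuousOn W (Set.Icc 0 χ) := by
    have h1 : ContinuousOn (fun t => ∫ τ in (0:ℝ)..t, k τ) (Set.uIcc 0 χ) :=
      intervalIntegral.continuousOn_primitive_interval
        ((intervalIntegrable_iff' ).1 (hk_int 0 χ le_rfl hχ0 le_rfl))
    rw [Set.uIcc_of_le hχ0] at h1
    refine ((continuousOn_const (c := a)).add h1 |>.sub continuousOn_id).congr fun t ht => ?_
    have := hWk t ht.1 ht.2
    change W t = a + (∫ τ in (0:ℝ)..t, k τ) - t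
    linarith
  have hWnn : ∀ t, 0 ≤ t → t ≤ tstar → 0 ≤ W t := by
    intro t h0 h1
    by_contra hneg
    have h2 := intermediate_value_Icc' h0
      (hWcont.mono (Set.Icc_subset_Icc le_rfl (h1.trans htsχ)))
    obtain ⟨s, hs, hs0⟩ := h2 (show (0:ℝ) ∈ Set.Icc (W t) (W 0) from
      ⟨(not_le.1 hneg).le, by rw [hW0]; exact ha_pos.le⟩)
    have h3 := htstar_uniq s ⟨hs.1, hs.2.trans (h1.trans htsχ)⟩ hs0
    have h4 : t = tstar := le_antisymm h1 (h3 ▸ hs.2)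
    rw [h4, htstar_zero] at hneg
    exact hneg le_rfl
  have hρ : ∀ n, 0 ≤ ρ n ∧ ρ n ≤ tstar := by
    intro n
    induction n with
    | zero => rw [hρ0]; exact ⟨le_rfl, hts0⟩
    | succ n ih =>
      have h1 := hWnn _ ih.1 ih.2
      have h2 := hWdiff (ρ n) tstar ih.1 ih.2 htsχ
      have h3 : 0 ≤ ∫ τ in (ρ n)..tstar, k τ :=
        intervalIntegral.integral_nonneg ih.2 fun τ hτ =>
          hk_nonneg τ (ih.1.trans hτ.1) (hτ.2.trans htsχ)
      rw [hρrec]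
      exact ⟨by linarith [ih.1], by linarith⟩
  have hρstep : ∀ n, ρ n ≤ ρ (n + 1) := fun n => by
    rw [hρrec]
    linarith [hWnn _ (hρ n).1 (hρ n).2]
  have hLip : ∀ t, 0 ≤ t → t ≤ tstar →
      ∀ x ∈ Metric.closedBall x₀ t, ∀ y ∈ Metric.closedBall x₀ t,
      ‖(y - (f y + g y)) - (x - (f x + g x))‖ ≤ k t * ‖y - x‖ := by
    intro t h0 h1 x hx y hy
    have hBD : Metric.closedBall x₀ t ⊆ D :=
      (Metric.closedBall_subset_closedBall h1).trans hball
    have hgt := hg t h0 hBD x hx y hy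
    have hft : ‖(f y - y) - (f x - x)‖ ≤ (1 - h - ω (χ - t)) * ‖y - x‖ := by
      refine (convex_closedBall x₀ t).norm_image_sub_le_of_norm_hasFDerivWithin_le
        (f := fun z => f z - z) (f' := fun z => f' z - ContinuousLinearMap.id ℝ X)
        (fun z hz => ((hf z (hBD hz)).mono hBD).sub (hasFDerivWithinAt_id z _)) ?_ hx hy
      intro z hz
      have hr := hreg x₀ hx₀ z (hBD hz)
      rw [hfx₀] at hr
      rw [hχdef]
      refine norm_deriv_sub_id_le hω_mono hω_conc hωinv_right hh1 _ (hhf z (hBD hz)) h0 hr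
        (by rw [← dist_eq_norm]; exact hz) ?_
      rw [← hχdef]
      exact h1.trans htsχ
    calc ‖(y - (f y + g y)) - (x - (f x + g x))‖
        = ‖((f y - y) - (f x - x)) + (g y - g x)‖ := by
          rw [← norm_neg]
          congr 1
          abel
      _ ≤ (1 - h - ω (χ - t)) * ‖y - x‖ + ψ t * ‖y - x‖ :=
          (norm_add_le _ _).trans (add_le_add hft hgt)
      _ = k t * ‖y - x‖ := by
          simp only [hkdef]
          ring
  have main : ∀ n, ‖u n - x₀‖ ≤ ρ n ∧ ‖u (n + 1) - u n‖ ≤ ρ (n + 1) - ρ n := by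
    intro n
    induction n with
    | zero =>
      refine ⟨by simp [hu0, hρ0], ?_⟩
      rw [hurec, hρrec, hρ0, hW0, hu0, sub_sub_cancel_left, norm_neg]
      linarith
    | succ n ih =>
      obtain ⟨ihb, ihs⟩ := ih
      refine ⟨?_, ?_⟩
      · calc ‖u (n + 1) - x₀‖ = ‖(u (n + 1) - u n) + (u n - x₀)‖ := by rw [sub_add_sub_cancel]
          _ ≤ _ := norm_add_le _ _
          _ ≤ ρ (n + 1) := by linarith
      set r := ρ (n + 1) - ρ n with hr
      have hr0 : 0 ≤ r := sub_nonneg.2 (hρstep n)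
      set Δ := u (n + 1) - u n with hΔ
      have hp := hρ n
      have hq := hρ (n + 1)
      have hrad : ∀ θ, 0 ≤ θ → θ ≤ 1 → 0 ≤ r * θ ∧ ρ n + r * θ ≤ tstar := fun θ h0 h1 => by
        have : r * θ ≤ r := mul_le_of_le_one_right hr0 h1
        exact ⟨by positivity, by linarith⟩
      have hin : ∀ s θ, 0 ≤ s → s ≤ θ →
          u n + s • Δ ∈ Metric.closedBall x₀ (ρ n + r * θ) := fun s θ h0 h1 => by
        rw [Metric.mem_closedBall, dist_eq_norm]
        calc ‖u n + s • Δ - x₀‖ = ‖(u n - x₀) + s • Δ‖ := by congr 1; abel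
          _ ≤ ‖u n - x₀‖ + ‖s • Δ‖ := norm_add_le _ _
          _ = ‖u n - x₀‖ + ‖Δ‖ * s := by
            rw [norm_smul, Real.norm_of_nonneg h0, mul_comm]
          _ ≤ ρ n + r * θ := by gcongr
      have hpath := norm_sub_le_integral_of_local_lipschitz
        (fun θ => (u n + θ • Δ) - (f (u n + θ • Δ) + g (u n + θ • Δ)))
        (fun θ => r * k (ρ n + r * θ))
        (fun s hs t ht hst => by
          have h1 := hrad s hs.1 hs.2
          have h2 := hrad t ht.1 ht.2
          refine mul_le_mul_of_nonneg_left (hk_mono ⟨by linarith, by linarith⟩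
            ⟨by linarith, by linarith⟩ ?_) hr0
          gcongr)
        (fun s t h0 h1 h2 => by
          have h3 := hrad t (h0.trans h1) h2
          have h4 := hLip (ρ n + r * t) (by linarith) h3.2 _ (hin s t h0 h1) _
            (hin t t (h0.trans h1) le_rfl)
          have h5 : (u n + t • Δ) - (u n + s • Δ) = (t - s) • Δ := by
            rw [sub_smul]
            abel
          rw [h5, norm_smul, Real.norm_of_nonneg (sub_nonneg.2 h1)] at h4
          have h6 := hk_nonneg (ρ n + r * t) (by linarith) (by linarith)
          calc _ ≤ _ := h4
            _ ≤ k (ρ n + r * t) * ((t - s) * r) := by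
              have := sub_nonneg.2 h1
              gcongr
            _ = _ := by ring)
      have hend : u n + Δ = u (n + 1) := by rw [hΔ]; abel
      simp only [one_smul, zero_smul, add_zero, hend] at hpath
      rw [← hurec, ← hurec, intervalIntegral.integral_const_mul,
        intervalIntegral.mul_integral_comp_add_mul, mul_zero, mul_one, add_zero] at hpath
      have hrend : ρ n + r = ρ (n + 1) := by rw [hr]; ring
      rw [hrend, ← hWdiff _ _ hp.1 (hρstep n) (hq.2.trans htsχ), ← hρrec, ← hρrec] at hpath
      exact hpath
  exact fun n => (main n).2
end

section
/- Let f be ω-regularly smooth on D with constant h and f'(x₀) = I, let g satisfy ‖g(x'') − g(x')‖ ≤ ψ(t)‖x'' − x'‖ for all x', x'' ∈ B̄(x₀, t) ⊆ D with ψ nondecreasing, let ‖f(x₀) + g(x₀)‖ ≤ a, suppose the function W(t) = Φ_h(t) + Ψ(t) has a unique zero t₊ in the interval [0, χ], and suppose the closed ball B̄(x₀, t₊) is contained in D. Then the equation f(x) + g(x) = 0 has a solution x₊ in B̄(x₀, t₊). -/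
/-!
The solution is the limit of the simplified Newton iteration `xₙ₊₁ = T xₙ`, where
`T x = x - (f x + g x)`, majorized by the scalar iteration `tₙ₊₁ = u tₙ` with `t₀ = 0` and
`u t = t + W t`.

Regular smoothness at the pair `(x₀, x)` together with the concavity of `ω` gives
`‖f' x - I‖ ≤ ω χ - ω (χ - t)` whenever `‖x - x₀‖ ≤ t ≤ χ` (`deriv_gap`). With
`κ t = ω χ - ω (χ - t) + ψ t`, the map `T` is therefore `κ t`-Lipschitz on the ball of radius `t`.
Since `κ` is nondecreasing, subdividing a segment (`norm_sub_le_integral_of_local`) yields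
`‖T y - T x‖ ≤ ∫ κ` over `[s, t]` as soon as `‖x - x₀‖ ≤ s` and `‖y - x‖ ≤ t - s`. That integral
equals `u t - u s`, because `u t = a + ∫ κ` over `[0, t]`.

Hence `‖xₙ₊₁ - xₙ‖ ≤ tₙ₊₁ - tₙ` by induction. As `u` is nondecreasing with `u 0 = a ≥ 0` and
`u tstar = tstar`, the sequence `tₙ` is nondecreasing and bounded by `tstar`, so `xₙ` is a Cauchy
sequence in the ball of radius `tstar`, and its limit is a fixed point of the continuous map `T`.
-/

open Set Filter Topology

/-! ### Concavity and the derivative bound -/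

/-- Increments of a concave function over intervals of equal length decrease: here the intervals
are `[c, d]` and `[q, p]`. -/
lemma concave_four_point {ω : ℝ → ℝ} (hω : ConcaveOn ℝ (Ici 0) ω) {c q d p : ℝ}
    (hc : 0 ≤ c) (hcq : c ≤ q) (hcd : c ≤ d) (hsum : q + d = c + p) :
    ω p - ω q ≤ ω d - ω c := by
  rcases eq_or_lt_of_le (show c ≤ p by linarith) with hcp | hcp
  · have h1 : q = c := by linarith
    have h2 : d = c := by linarith
    subst h1 h2 hcp
    simp
  · have hpos : 0 < p - c := by linarith
    have hl0 : 0 ≤ (p - q) / (p - c) := div_nonneg (by linarith) hpos.le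
    have hm0 : 0 ≤ (q - c) / (p - c) := div_nonneg (by linarith) hpos.le
    have hone : (p - q) / (p - c) + (q - c) / (p - c) = 1 := by
      field_simp
      ring
    have h1 := hω.2 (mem_Ici.2 hc) (mem_Ici.2 (by linarith : (0:ℝ) ≤ p)) hl0 hm0 hone
    have h2 := hω.2 (mem_Ici.2 hc) (mem_Ici.2 (by linarith : (0:ℝ) ≤ p)) hm0 hl0
      (by rw [add_comm]; exact hone)
    have e1 : (p - q) / (p - c) * c + (q - c) / (p - c) * p = q := by
      field_simp
      ring
    have e2 : (q - c) / (p - c) * c + (p - q) / (p - c) * p = d := by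
      have : d = c + p - q := by linarith
      rw [this]
      field_simp
      ring
    simp only [smul_eq_mul] at h1 h2
    rw [e1] at h1
    rw [e2] at h2
    have e3 : (p - q) / (p - c) = 1 - (q - c) / (p - c) := by linarith
    rw [e3] at h1 h2
    linarith

/-- The scalar content of regular smoothness at `x₀`: `n` plays the role of `‖f' x‖`, `δ` that of
`‖f' x - I‖` and `r` that of `‖x - x₀‖`. Writing `m = min 1 n - h`, the point `χ = ω⁻¹ (1 - h)` lies
between `ω⁻¹ m` and `ω⁻¹ (m + δ)`, so that interval can be shifted left to end at `χ`, which by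
concavity only increases the increment of `ω`. -/
lemma deriv_gap {ω ωinv : ℝ → ℝ}
    (hω_mono : StrictMonoOn ω (Ici 0)) (hω_conc : ConcaveOn ℝ (Ici 0) ω)
    (hωinv_right : ∀ s, 0 ≤ s → 0 ≤ ωinv s ∧ ω (ωinv s) = s)
    {h n δ r t χ : ℝ} (hh1 : h ≤ 1) (hn : h ≤ n) (hδ : 0 ≤ δ) (hnδ : 1 ≤ n + δ)
    (hreg : ωinv (min 1 n - h + δ) - ωinv (min 1 n - h) ≤ r)
    (hrt : r ≤ t) (htχ : t ≤ χ) (hχ : χ = ωinv (1 - h)) :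
    δ ≤ ω χ - ω (χ - t) := by
  have hm0 : 0 ≤ min 1 n - h := sub_nonneg.2 (le_min hh1 hn)
  have hm1 : min 1 n - h ≤ 1 - h := by linarith [min_le_left 1 n]
  have hmδ : 1 - h ≤ min 1 n - h + δ := by
    rcases min_cases 1 n with ⟨e, _⟩ | ⟨e, _⟩ <;> rw [e] <;> linarith
  obtain ⟨hq0, hq⟩ := hωinv_right _ hm0
  obtain ⟨hp0, hp⟩ := hωinv_right _ (by linarith : 0 ≤ min 1 n - h + δ)
  obtain ⟨hχ0, hχω⟩ := hωinv_right (1 - h) (by linarith)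
  rw [← hχ] at hχ0 hχω
  set q := ωinv (min 1 n - h)
  set p := ωinv (min 1 n - h + δ)
  have hqp : q ≤ p := (hω_mono.le_iff_le hq0 hp0).1 (by rw [hq, hp]; linarith)
  have hχp : χ ≤ p := (hω_mono.le_iff_le hχ0 hp0).1 (by rw [hχω, hp]; linarith)
  have h4 := concave_four_point hω_conc (c := χ - (p - q)) (q := q) (d := χ) (p := p)
    (by linarith) (by linarith) (by linarith) (by ring)
  have h5 : ω (χ - t) ≤ ω (χ - (p - q)) :=
    hω_mono.monotoneOn (mem_Ici.2 (by linarith)) (mem_Ici.2 (by linarith)) (by linarith)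
  linarith

/-! ### Majorant iteration -/

/-- A curve whose increments on `[s, t]` are bounded by `κ t * (t - s)`, with `κ` nondecreasing but
possibly discontinuous, has total increment at most the integral of `κ`. -/
lemma norm_sub_le_integral_of_local {E : Type*} [NormedAddCommGroup E] {G : ℝ → E} {κ : ℝ → ℝ}
    {a b : ℝ} (hab : a ≤ b) (hκ : MonotoneOn κ (Icc a b))
    (hG : ∀ s ∈ Icc a b, ∀ t ∈ Icc a b, s ≤ t → ‖G t - G s‖ ≤ κ t * (t - s)) :
    ‖G b - G a‖ ≤ ∫ τ in a..b, κ τ := by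
  -- With `n` equal pieces, the right-endpoint sum exceeds the integral by at most this error.
  have key : ∀ n : ℕ, 0 < n →
      ‖G b - G a‖ ≤ (∫ τ in a..b, κ τ) + (κ b - κ a) * (b - a) * (1 / (n : ℝ)) := by
    intro n hn
    have hn' : (0:ℝ) < n := by exact_mod_cast hn
    rcases eq_or_lt_of_le hab with rfl | hlt
    · simp
    set c : ℝ := (b - a) / n with hc
    have hc0 : 0 < c := div_pos (by linarith) hn'
    have hcn : c * n = b - a := by
      rw [hc]
      field_simp
    have hmem : ∀ s ∈ Icc (0:ℝ) (0 + (n:ℝ)), a + c * s ∈ Icc a b := by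
      intro s hs
      constructor
      · nlinarith [hs.1]
      · nlinarith [hs.2]
    have hmono : MonotoneOn (fun s : ℝ => κ (a + c * s)) (Icc (0:ℝ) (0 + (n:ℝ))) := by
      intro s hs t ht hst
      exact hκ (hmem s hs) (hmem t ht) (by nlinarith)
    have hsum := hmono.sum_le_integral
    have hint : c * ∫ s in (0:ℝ)..(0 + (n:ℝ)), κ (a + c * s) = ∫ τ in a..b, κ τ := by
      rw [intervalIntegral.integral_comp_add_mul _ hc0.ne' a, smul_eq_mul, ← mul_assoc,
        mul_inv_cancel₀ hc0.ne', one_mul]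
      congr 1 <;> linarith
    have hmemN : ∀ i : ℕ, i ≤ n → a + c * (i:ℝ) ∈ Icc a b := by
      intro i hi
      apply hmem
      have : (i:ℝ) ≤ n := by exact_mod_cast hi
      exact ⟨by positivity, by linarith⟩
    have htel : G b - G a
        = ∑ i ∈ Finset.range n, (G (a + c * ((i + 1 : ℕ) : ℝ)) - G (a + c * (i:ℝ))) := by
      rw [Finset.sum_range_sub (fun i : ℕ => G (a + c * (i:ℝ)))]
      congr 2
      · linarith
      · simp
    have hstep : ‖G b - G a‖ ≤ ∑ i ∈ Finset.range n, κ (a + c * ((i + 1 : ℕ) : ℝ)) * c := by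
      rw [htel]
      refine (norm_sum_le _ _).trans (Finset.sum_le_sum fun i hi => ?_)
      have hi' := Finset.mem_range.1 hi
      have := hG _ (hmemN i hi'.le) _ (hmemN (i + 1) hi') (by push_cast; nlinarith)
      refine this.trans (le_of_eq ?_)
      push_cast
      ring
    have hshift : ∑ i ∈ Finset.range n, κ (a + c * ((i + 1 : ℕ) : ℝ))
        = (∑ i ∈ Finset.range n, κ (a + c * (i : ℝ))) + (κ b - κ a) := by
      have h1 := Finset.sum_range_sub (fun i : ℕ => κ (a + c * (i:ℝ))) n
      rw [Finset.sum_sub_distrib] at h1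
      have e1 : a + c * (n:ℝ) = b := by linarith
      simp only [e1, Nat.cast_zero, mul_zero, add_zero] at h1
      linarith
    rw [← Finset.sum_mul, hshift] at hstep
    simp only [zero_add] at hsum hint
    have h3 := mul_le_mul_of_nonneg_left hsum hc0.le
    rw [hint] at h3
    have e4 : (κ b - κ a) * (b - a) * (1 / (n:ℝ)) = (κ b - κ a) * c := by
      rw [hc]
      ring
    rw [e4]
    linarith
  have hlim : Tendsto (fun n : ℕ =>
      (∫ τ in a..b, κ τ) + (κ b - κ a) * (b - a) * (1 / (n : ℝ))) atTop
      (𝓝 ((∫ τ in a..b, κ τ) + (κ b - κ a) * (b - a) * 0)) :=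
    (tendsto_one_div_atTop_nhds_zero_nat.const_mul _).const_add _
  rw [mul_zero, add_zero] at hlim
  refine ge_of_tendsto hlim ?_
  filter_upwards [eventually_gt_atTop 0] with n hn using key n hn

/-- Majorant principle. If `T` is `κ t`-Lipschitz on the ball of radius `t` for every `t ≤ R`, and
the scalar map `u` with increments `∫ κ` dominates the first step of the iteration and fixes `R`,
then `T` has a fixed point in the ball of radius `R`. -/
lemma exists_fixed_of_majorant {X : Type*} [NormedAddCommGroup X] [NormedSpace ℝ X]
    [CompleteSpace X] {x₀ : X} {T : X → X} {κ u : ℝ → ℝ} {R : ℝ} (hR : 0 ≤ R)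
    (hκ : MonotoneOn κ (Icc 0 R)) (hκ0 : ∀ t ∈ Icc 0 R, 0 ≤ κ t)
    (hT : ∀ t ∈ Icc 0 R, ∀ x ∈ Metric.closedBall x₀ t, ∀ y ∈ Metric.closedBall x₀ t,
      ‖T y - T x‖ ≤ κ t * ‖y - x‖)
    (hu : ∀ s ∈ Icc 0 R, ∀ t ∈ Icc 0 R, s ≤ t → u t - u s = ∫ τ in s..t, κ τ)
    (h0 : ‖T x₀ - x₀‖ ≤ u 0) (huR : u R = R) :
    ∃ x ∈ Metric.closedBall x₀ R, T x = x := by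
  have humono : ∀ s ∈ Icc 0 R, ∀ t ∈ Icc 0 R, s ≤ t → u s ≤ u t := by
    intro s hs t ht hst
    have : 0 ≤ ∫ τ in s..t, κ τ := intervalIntegral.integral_nonneg hst
      fun τ hτ => hκ0 τ ⟨hs.1.trans hτ.1, hτ.2.trans ht.2⟩
    linarith [hu s hs t ht hst]
  have hinc : ∀ s ∈ Icc 0 R, ∀ t ∈ Icc 0 R, s ≤ t → ∀ x y : X, ‖x - x₀‖ ≤ s → ‖y - x‖ ≤ t - s →
      ‖T y - T x‖ ≤ u t - u s := by
    intro s hs t ht hst x y hx hy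
    rcases eq_or_lt_of_le hst with rfl | hlt
    · have : y = x := by
        rw [sub_self] at hy
        exact sub_eq_zero.1 (norm_le_zero_iff.1 hy)
      simp [this]
    have hpos : 0 < t - s := by linarith
    rw [hu s hs t ht hst]
    -- The segment from `x` to `y`, parametrized so that the time bounds the distance to `x₀`.
    set γ : ℝ → X := fun σ => x + ((σ - s) / (t - s)) • (y - x) with hγ
    have hγs : γ s = x := by simp [hγ]
    have hγt : γ t = y := by simp [hγ, div_self hpos.ne']
    have hγd : ∀ σ τ, σ ≤ τ → ‖γ τ - γ σ‖ ≤ τ - σ := by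
      intro σ τ hστ
      have e : γ τ - γ σ = ((τ - σ) / (t - s)) • (y - x) := by
        simp only [hγ, add_sub_add_left_eq_sub, ← sub_smul]
        congr 1
        ring
      rw [e, norm_smul, Real.norm_of_nonneg (div_nonneg (by linarith) hpos.le)]
      calc (τ - σ) / (t - s) * ‖y - x‖ ≤ (τ - σ) / (t - s) * (t - s) :=
            mul_le_mul_of_nonneg_left hy (div_nonneg (by linarith) hpos.le)
        _ = τ - σ := by field_simp
    have hγb : ∀ σ, s ≤ σ → ‖γ σ - x₀‖ ≤ σ := by
      intro σ hσ
      have h1 := hγd s σ hσ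
      have h2 := norm_sub_le_norm_sub_add_norm_sub (γ σ) (γ s) x₀
      rw [hγs] at h1 h2
      linarith
    have hsub : Icc s t ⊆ Icc 0 R := Icc_subset_Icc hs.1 ht.2
    have := norm_sub_le_integral_of_local (G := fun σ => T (γ σ)) hst (hκ.mono hsub)
      (by
        intro σ hσ τ hτ hστ
        refine (hT τ (hsub hτ) (γ σ) ?_ (γ τ) ?_).trans
          (mul_le_mul_of_nonneg_left (hγd σ τ hστ) (hκ0 τ (hsub hτ)))
        · rw [mem_closedBall_iff_norm]
          exact (hγb σ hσ.1).trans hστ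
        · rw [mem_closedBall_iff_norm]
          exact hγb τ hτ.1)
    simpa only [hγs, hγt] using this
  have hu0 : 0 ≤ u 0 := (norm_nonneg _).trans h0
  have h0mem : (0:ℝ) ∈ Icc 0 R := ⟨le_rfl, hR⟩
  have hRmem : R ∈ Icc 0 R := ⟨hR, le_rfl⟩
  set t : ℕ → ℝ := fun n => u^[n] 0 with ht
  set x : ℕ → X := fun n => T^[n] x₀ with hx
  have htS : ∀ n, t (n + 1) = u (t n) := fun n => Function.iterate_succ_apply' _ _ _
  have hxS : ∀ n, x (n + 1) = T (x n) := fun n => Function.iterate_succ_apply' _ _ _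
  have ht0 : t 0 = 0 := rfl
  have hx0 : x 0 = x₀ := rfl
  have htmem : ∀ n, t n ∈ Icc 0 R := by
    intro n
    induction n with
    | zero => rw [ht0]; exact h0mem
    | succ n ih =>
      rw [htS]
      exact ⟨hu0.trans (humono _ h0mem _ ih ih.1), (humono _ ih _ hRmem ih.2).trans_eq huR⟩
  have htmono : ∀ n, t n ≤ t (n + 1) := by
    intro n
    induction n with
    | zero => rw [htS, ht0]; exact hu0
    | succ n ih =>
      rw [htS (n + 1)]
      conv_lhs => rw [htS n]
      exact humono _ (htmem n) _ (htmem (n + 1)) ih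
  have hmaj : ∀ n, ‖x n - x₀‖ ≤ t n ∧ ‖x (n + 1) - x n‖ ≤ t (n + 1) - t n := by
    intro n
    induction n with
    | zero =>
      rw [hxS, htS, hx0, ht0]
      simpa using h0
    | succ n ih =>
      refine ⟨?_, ?_⟩
      · have := norm_sub_le_norm_sub_add_norm_sub (x (n + 1)) (x n) x₀
        linarith [ih.1, ih.2]
      · rw [hxS (n + 1), htS (n + 1)]
        have := hinc _ (htmem n) _ (htmem (n + 1)) (htmono n) (x n) (x (n + 1)) ih.1 ih.2
        rwa [← hxS n, ← htS n] at this
  have hsummable : Summable fun n => t (n + 1) - t n := by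
    refine summable_of_sum_range_le (c := R) (fun n => sub_nonneg.2 (htmono n)) fun n => ?_
    rw [Finset.sum_range_sub, ht0, sub_zero]
    exact (htmem n).2
  have hcauchy : CauchySeq x := by
    refine cauchySeq_of_dist_le_of_summable _ (fun n => ?_) hsummable
    rw [dist_comm, dist_eq_norm]
    exact (hmaj n).2
  obtain ⟨z, hz⟩ := cauchySeq_tendsto_of_complete hcauchy
  have hxball : ∀ n, x n ∈ Metric.closedBall x₀ R := fun n => by
    rw [mem_closedBall_iff_norm]
    exact (hmaj n).1.trans (htmem n).2
  have hzball : z ∈ Metric.closedBall x₀ R :=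
    Metric.isClosed_closedBall.mem_of_tendsto hz (Eventually.of_forall hxball)
  refine ⟨z, hzball, ?_⟩
  have hTz : Tendsto (fun n => T (x n)) atTop (𝓝 (T z)) := by
    rw [tendsto_iff_norm_sub_tendsto_zero] at hz ⊢
    refine squeeze_zero (fun n => norm_nonneg _)
      (fun n => hT R hRmem z hzball (x n) (hxball n)) ?_
    simpa using hz.const_mul (κ R)
  refine tendsto_nhds_unique hTz ?_
  have := (tendsto_add_atTop_iff_nat 1).2 hz
  simpa only [hxS] using this

/-! ### Existence of the solution -/

/-- existence part of Lemma on the resolvability: Under the hypotheses of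
regular smoothness of `f`, the ball-Lipschitz condition on `g`, `‖f(x₀) + g(x₀)‖ ≤ a`,
a unique zero `tstar` of `W` in `[0, χ]` and `B̄(x₀, tstar) ⊆ D`, the equation
`f(x) + g(x) = 0` has a solution in `B̄(x₀, tstar)`. -/
theorem existence_of_solution
    {X : Type*} [NormedAddCommGroup X] [NormedSpace ℝ X] [CompleteSpace X]
    (D : Set X) (hD : Convex ℝ D) (x₀ : X) (hx₀ : x₀ ∈ D)
    (f g : X → X) (f' : X → X →L[ℝ] X)
    (hf : ∀ x ∈ D, HasFDerivWithinAt f (f' x) D x)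
    (hfx₀ : f' x₀ = ContinuousLinearMap.id ℝ X)
    (ω ωinv ψ : ℝ → ℝ)
    (hω_cont : ContinuousOn ω (Set.Ici 0))
    (hω_mono : StrictMonoOn ω (Set.Ici 0))
    (hω_conc : ConcaveOn ℝ (Set.Ici 0) ω)
    (hω0 : ω 0 = 0)
    (hω_nonneg : ∀ t, 0 ≤ t → 0 ≤ ω t)
    (hωinv_left : ∀ t, 0 ≤ t → ωinv (ω t) = t)
    (hωinv_right : ∀ s, 0 ≤ s → 0 ≤ ωinv s ∧ ω (ωinv s) = s)
    (h : ℝ) (hh0 : 0 ≤ h) (hh1 : h ≤ 1) (hhf : ∀ x ∈ D, h ≤ ‖f' x‖)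
    (hreg : ∀ x' ∈ D, ∀ x'' ∈ D,
      ωinv (min ‖f' x'‖ ‖f' x''‖ - h + ‖f' x'' - f' x'‖)
        - ωinv (min ‖f' x'‖ ‖f' x''‖ - h) ≤ ‖x'' - x'‖)
    (hψ_mono : MonotoneOn ψ (Set.Ici 0))
    (hψ_nonneg : ∀ t, 0 ≤ t → 0 ≤ ψ t)
    (hg : ∀ t, 0 ≤ t → Metric.closedBall x₀ t ⊆ D →
      ∀ x' ∈ Metric.closedBall x₀ t, ∀ x'' ∈ Metric.closedBall x₀ t,
        ‖g x'' - g x'‖ ≤ ψ t * ‖x'' - x'‖)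
    (a : ℝ) (ha_pos : 0 < a) (ha : ‖f x₀ + g x₀‖ ≤ a)
    (χ : ℝ) (hχdef : χ = ωinv (1 - h))
    (Ω Ψ W : ℝ → ℝ)
    (hΩ : ∀ t, Ω t = ∫ τ in (0:ℝ)..t, ω τ)
    (hΨ : ∀ t, Ψ t = ∫ τ in (0:ℝ)..t, ψ τ)
    (hW : ∀ t, W t = a - Ω χ + Ω (χ - t) - t * h + Ψ t)
    (tstar : ℝ) (htstar_mem : tstar ∈ Set.Icc 0 χ) (htstar_zero : W tstar = 0)
    (htstar_uniq : ∀ s ∈ Set.Icc 0 χ, W s = 0 → s = tstar)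
    (hball : Metric.closedBall x₀ tstar ⊆ D) :
    ∃ xstar ∈ Metric.closedBall x₀ tstar, f xstar + g xstar = 0 := by
  -- In the zero space `‖id‖ = 0`, so the bound on `f' x - I` below needs `X` nontrivial.
  rcases subsingleton_or_nontrivial X with hX | hX
  · exact ⟨x₀, Metric.mem_closedBall_self htstar_mem.1, Subsingleton.elim _ _⟩
  have hωχ : ω χ = 1 - h := by
    rw [hχdef]
    exact (hωinv_right _ (by linarith)).2
  have htχ := htstar_mem.2
  have hgap : ∀ t ∈ Icc 0 tstar, ∀ x ∈ Metric.closedBall x₀ t,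
      ‖f' x - ContinuousLinearMap.id ℝ X‖ ≤ ω χ - ω (χ - t) := by
    intro t ht x hx
    have hxD : x ∈ D := hball (Metric.closedBall_subset_closedBall ht.2 hx)
    have hnorm : ‖ContinuousLinearMap.id ℝ X‖ = 1 := ContinuousLinearMap.norm_id
    have hr := hreg x₀ hx₀ x hxD
    rw [hfx₀, hnorm] at hr
    refine deriv_gap hω_mono hω_conc hωinv_right hh1 (hhf x hxD) (norm_nonneg _) ?_ hr
      (mem_closedBall_iff_norm.1 hx) (ht.2.trans htχ) hχdef
    rw [← hnorm]
    exact norm_le_norm_add_norm_sub _ _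
  have hψint : ∀ s ∈ Icc 0 tstar, ∀ t ∈ Icc 0 tstar,
      IntervalIntegrable ψ MeasureTheory.volume s t := by
    intro s hs t ht
    refine (hψ_mono.mono ?_).intervalIntegrable
    intro y hy
    exact (le_min hs.1 ht.1).trans hy.1
  have hωint : ∀ s, 0 ≤ s → ∀ t, 0 ≤ t → IntervalIntegrable ω MeasureTheory.volume s t := by
    intro s hs t ht
    refine (hω_mono.monotoneOn.mono ?_).intervalIntegrable
    intro y hy
    exact (le_min hs ht).trans hy.1
  have hω_le : ∀ s t, s ≤ t → t ≤ tstar → ω (χ - t) ≤ ω (χ - s) := fun s t hst ht =>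
    hω_mono.monotoneOn (mem_Ici.2 (by linarith)) (mem_Ici.2 (by linarith)) (by linarith)
  obtain ⟨z, hz, hTz⟩ := exists_fixed_of_majorant (x₀ := x₀)
    (T := fun x => x - (f x + g x)) (κ := fun t => ω χ - ω (χ - t) + ψ t)
    (u := fun t => t + W t) htstar_mem.1
    (by
      intro s hs t ht hst
      have h1 := hω_le s t hst ht.2
      have h2 := hψ_mono (mem_Ici.2 hs.1) (mem_Ici.2 ht.1) hst
      simp only
      linarith)
    (by
      intro t ht
      have h1 := hω_le 0 t ht.1 ht.2
      rw [sub_zero] at h1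
      have h2 := hψ_nonneg t ht.1
      linarith)
    (by
      intro t ht x hx y hy
      have hsub : Metric.closedBall x₀ t ⊆ D :=
        (Metric.closedBall_subset_closedBall ht.2).trans hball
      have hgl := hg t ht.1 hsub x hx y hy
      have hfl := (convex_closedBall x₀ t).norm_image_sub_le_of_norm_hasFDerivWithin_le
        (f := fun x => f x - x) (f' := fun x => f' x - ContinuousLinearMap.id ℝ X)
        (fun v hv => ((hf v (hsub hv)).mono hsub).sub (hasFDerivWithinAt_id v _))
        (hgap t ht) hx hy
      have e : (y - (f y + g y)) - (x - (f x + g x))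
          = -(((f y - y) - (f x - x)) + (g y - g x)) := by abel
      rw [e, norm_neg, add_mul]
      exact (norm_add_le _ _).trans (add_le_add hfl hgl))
    (by
      intro s hs t ht hst
      have hs' : 0 ≤ χ - s := by linarith [hs.2]
      have ht' : 0 ≤ χ - t := by linarith [ht.2]
      have i1 : IntervalIntegrable (fun τ => ω (χ - τ)) MeasureTheory.volume s t := by
        have := (hωint _ hs' _ ht').comp_sub_left χ
        simpa using this
      have i2 := hψint s hs t ht
      have i3 : IntervalIntegrable (fun _ : ℝ => ω χ) MeasureTheory.volume s t :=
        intervalIntegrable_const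
      rw [intervalIntegral.integral_add (i3.sub i1) i2, intervalIntegral.integral_sub i3 i1,
        intervalIntegral.integral_const, intervalIntegral.integral_comp_sub_left, smul_eq_mul]
      have h0m : (0:ℝ) ∈ Icc 0 tstar := ⟨le_rfl, htstar_mem.1⟩
      have a1 := intervalIntegral.integral_add_adjacent_intervals
        (hωint 0 le_rfl _ ht') (hωint _ ht' _ hs')
      have a2 := intervalIntegral.integral_add_adjacent_intervals (hψint 0 h0m s hs) i2
      simp only [hW, hΩ, hΨ]
      rw [← a1, ← a2, hωχ]
      ring)
    (by
      have e : x₀ - (f x₀ + g x₀) - x₀ = -(f x₀ + g x₀) := by abel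
      have hW0 : W 0 = a := by
        rw [hW, hΨ]
        simp
      rw [e, norm_neg, hW0, zero_add]
      exact ha)
    (by simp only [htstar_zero, add_zero])
  exact ⟨z, hz, sub_eq_self.1 hTz⟩
end

section
/- Let f be ω-regularly smooth on D with constant h and f'(x₀) = I, let g satisfy ‖g(x'') − g(x')‖ ≤ ψ(t)‖x'' − x'‖ for all x', x'' ∈ B̄(x₀, t) ⊆ D with ψ nondecreasing, let ‖f(x₀) + g(x₀)‖ ≤ a, and assume a < Ω(χ) + h·χ − Ψ(χ). Let {t_n} be the scalar sequence t₀ = 0, t_{n+1} = t_n + (a − Ω(χ) + Ω(χ − t_n) − t_n·h + Ψ(t_n))/(h + ω(χ − t_n)). If for all 1 ≤ k ≤ n the Newton iterates x_k are defined and satisfy ‖x_k − x_{k−1}‖ ≤ t_k − t_{k−1}, then r(x_{n−1}, x_n) = ‖f(x_n) − f(x_{n−1}) − f'(x_{n−1})(x_n − x_{n−1})‖ ≤ a − Ω(χ) + Ω(χ − t_n) − t_n·h + Ψ(t_{n−1}). -/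
/-!
Write `u(z) = ω⁻¹(‖f'(z)‖ - h)` and `C = χ - t_{n-1}`, `d = ‖x_n - x_{n-1}‖`,
`δ = t_n - t_{n-1}`.

Regular smoothness makes `u` 1-Lipschitz on `D` (`gauge_sub_le`), and `u(x₀) = χ`, so `u` is at
least `C - s d` along the segment `x_{n-1} + s (x_n - x_{n-1})`. Since increments of the concave
function `ω` decrease as the base point moves right, regular smoothness then gives
`‖f'(x_{n-1} + s (x_n - x_{n-1})) - f'(x_{n-1})‖ ≤ ω(C) - ω(C - s d)` (`norm_deriv_sub_le`).
Integrating along the segment (`remainder_le`) bounds the remainder by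
`d ω(C) - (Ω(C) - Ω(C - d))`, which is nondecreasing in `d`, hence at most
`δ ω(C) - (Ω(C) - Ω(C - δ))`. By the recursion `(h + ω(C)) δ = W(t_{n-1})`, this is exactly the
claimed bound.

All of this needs `t_n ≤ χ`, which follows inductively from `W(χ) < 0` and
`W(t_k) - W(χ) ≤ (h + ω(χ - t_k)) (χ - t_k)`.
-/

/-- Increments of a concave function decrease as the base point moves right. -/
lemma concave_increment_le_s13 {ω : ℝ → ℝ} (hω : ConcaveOn ℝ (Set.Ici 0) ω) {c u e : ℝ}
    (hc : 0 ≤ c) (hcu : c ≤ u) (he : 0 ≤ e) : ω (u + e) - ω u ≤ ω (c + e) - ω c := by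
  rcases (add_nonneg (sub_nonneg.2 hcu) he).eq_or_lt with h0 | hpos
  · have : u = c := by linarith
    rw [this]
  -- both `u` and `c + e` are convex combinations of `c` and `u + e`, with swapped weights
  have hl : 0 ≤ e / (u - c + e) := by positivity
  have hl' : 0 ≤ (u - c) / (u - c + e) := div_nonneg (by linarith) hpos.le
  have hs : e / (u - c + e) + (u - c) / (u - c + e) = 1 := by field_simp; ring
  have hcm : c ∈ Set.Ici (0 : ℝ) := hc
  have hum : u + e ∈ Set.Ici (0 : ℝ) := Set.mem_Ici.2 (by linarith)
  have h1 := hω.2 hcm hum hl hl' hs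
  have h2 := hω.2 hcm hum hl' hl (by linarith)
  simp only [smul_eq_mul] at h1 h2
  have e1 : e / (u - c + e) * c + (u - c) / (u - c + e) * (u + e) = u := by field_simp; ring
  have e2 : (u - c) / (u - c + e) * c + e / (u - c + e) * (u + e) = c + e := by
    field_simp; ring
  rw [e1] at h1
  rw [e2] at h2
  have e3 : e / (u - c + e) = 1 - (u - c) / (u - c + e) := by linarith
  rw [e3] at h1 h2
  linarith

/-- The primitive of a function monotone on `[0, ∞)` has increments at most the length of the
interval times the value at its right end. -/
lemma integral_sub_le {ω : ℝ → ℝ} (hω : MonotoneOn ω (Set.Ici 0)) {p q : ℝ}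
    (hp : 0 ≤ p) (hpq : p ≤ q) :
    (∫ τ in (0:ℝ)..q, ω τ) - (∫ τ in (0:ℝ)..p, ω τ) ≤ (q - p) * ω q := by
  have hint : ∀ b c : ℝ, 0 ≤ b → 0 ≤ c → IntervalIntegrable ω MeasureTheory.volume b c := by
    intro b c hb hc
    refine (hω.mono ?_).intervalIntegrable
    intro y hy
    exact le_trans (le_min hb hc) hy.1
  have hq : 0 ≤ q := hp.trans hpq
  rw [intervalIntegral.integral_interval_sub_left (hint 0 q le_rfl hq) (hint 0 p le_rfl hp)]
  have := intervalIntegral.integral_mono_on hpq (hint p q hp hq)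
    (intervalIntegrable_const (c := ω q)) (fun y hy =>
      hω (Set.mem_Ici.2 (hp.trans hy.1)) (Set.mem_Ici.2 hq) hy.2)
  simpa using this

lemma integral_le_integral {ψ : ℝ → ℝ} (hψ : MonotoneOn ψ (Set.Ici 0))
    (h0 : ∀ t, 0 ≤ t → 0 ≤ ψ t) {p q : ℝ} (hp : 0 ≤ p) (hpq : p ≤ q) :
    (∫ τ in (0:ℝ)..p, ψ τ) ≤ ∫ τ in (0:ℝ)..q, ψ τ := by
  have hint : ∀ b c : ℝ, 0 ≤ b → 0 ≤ c → IntervalIntegrable ψ MeasureTheory.volume b c := by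
    intro b c hb hc
    refine (hψ.mono ?_).intervalIntegrable
    intro y hy
    exact le_trans (le_min hb hc) hy.1
  have hq : 0 ≤ q := hp.trans hpq
  have e := intervalIntegral.integral_interval_sub_left (hint 0 q le_rfl hq) (hint 0 p le_rfl hp)
  have := intervalIntegral.integral_nonneg hpq (fun y hy => h0 y (hp.trans hy.1))
    (μ := MeasureTheory.volume)
  linarith

/-- One-sided form of the fact that `z ↦ ω⁻¹(‖f'(z)‖ - h)` is 1-Lipschitz, phrased for two
operators `A`, `B` satisfying the regular smoothness inequality at distance `r`. -/
lemma gauge_sub_le {E : Type*} [SeminormedAddCommGroup E] {ωinv : ℝ → ℝ}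
    (hmono : MonotoneOn ωinv (Set.Ici 0)) {h r : ℝ} {A B : E} (hA : h ≤ ‖A‖) (hr : 0 ≤ r)
    (hB : h ≤ ‖B‖) (hreg : ωinv (min ‖A‖ ‖B‖ - h + ‖B - A‖) - ωinv (min ‖A‖ ‖B‖ - h) ≤ r) :
    ωinv (‖A‖ - h) - ωinv (‖B‖ - h) ≤ r := by
  have hdiff : ‖A‖ - ‖B‖ ≤ ‖B - A‖ := by
    rw [norm_sub_rev]; exact norm_sub_norm_le A B
  rcases le_total ‖A‖ ‖B‖ with hAB | hAB
  · have := hmono (Set.mem_Ici.2 (sub_nonneg.2 hA)) (Set.mem_Ici.2 (sub_nonneg.2 hB))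
      (sub_le_sub_right hAB h)
    linarith
  · rw [min_eq_right hAB] at hreg
    have := hmono (Set.mem_Ici.2 (sub_nonneg.2 hA))
      (Set.mem_Ici.2 (add_nonneg (sub_nonneg.2 hB) (norm_nonneg (B - A))))
      (show ‖A‖ - h ≤ ‖B‖ - h + ‖B - A‖ by linarith)
    linarith

/-- If both `ω⁻¹(‖A‖ - h)` and `ω⁻¹(‖B‖ - h)` are at least `c`, then the regular smoothness
inequality at distance `r` bounds `‖B - A‖` by the increment of `ω` over `[c, c + r]`. -/
lemma norm_deriv_sub_le {E : Type*} [SeminormedAddCommGroup E] {ω ωinv : ℝ → ℝ}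
    (hω_mono : MonotoneOn ω (Set.Ici 0)) (hω_conc : ConcaveOn ℝ (Set.Ici 0) ω)
    (hωinv_right : ∀ s, 0 ≤ s → 0 ≤ ωinv s ∧ ω (ωinv s) = s)
    {h r c : ℝ} {A B : E} (hA : h ≤ ‖A‖) (hB : h ≤ ‖B‖) (hr : 0 ≤ r) (hc : 0 ≤ c)
    (hcA : c ≤ ωinv (‖A‖ - h)) (hcB : c ≤ ωinv (‖B‖ - h))
    (hreg : ωinv (min ‖A‖ ‖B‖ - h + ‖B - A‖) - ωinv (min ‖A‖ ‖B‖ - h) ≤ r) :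
    ‖B - A‖ ≤ ω (c + r) - ω c := by
  set m := min ‖A‖ ‖B‖ - h with hm
  have hm0 : 0 ≤ m := sub_nonneg.2 (le_min hA hB)
  have hcm : c ≤ ωinv m := by
    rcases min_choice ‖A‖ ‖B‖ with e | e <;> rw [hm, e] <;> assumption
  obtain ⟨hi0, hi1⟩ := hωinv_right m hm0
  obtain ⟨hj0, hj1⟩ := hωinv_right (m + ‖B - A‖) (by positivity)
  have h1 := hω_mono (Set.mem_Ici.2 hj0) (Set.mem_Ici.2 (add_nonneg hi0 hr))
    (show ωinv (m + ‖B - A‖) ≤ ωinv m + r by linarith)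
  have h2 := concave_increment_le_s13 hω_conc hc hcm hr
  linarith

/-- Integrated form of a bound `‖f'(x + s (y - x)) - f'(x)‖ ≤ ω(C) - ω(C - s ‖y - x‖)` on the
variation of the derivative along a segment. -/
lemma remainder_le {X : Type*} [NormedAddCommGroup X] [NormedSpace ℝ X] {D : Set X}
    (hD : Convex ℝ D) {f : X → X} {f' : X → X →L[ℝ] X}
    (hf : ∀ x ∈ D, HasFDerivWithinAt f (f' x) D x) {ω : ℝ → ℝ}
    (hω_cont : ContinuousOn ω (Set.Ici 0)) {x y : X} (hx : x ∈ D) (hy : y ∈ D) {C : ℝ}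
    (hdC : ‖y - x‖ ≤ C)
    (hbd : ∀ s ∈ Set.Icc (0:ℝ) 1,
      ‖f' (x + s • (y - x)) - f' x‖ ≤ ω C - ω (C - s * ‖y - x‖)) :
    ‖f y - f x - f' x (y - x)‖ ≤
      ‖y - x‖ * ω C - ((∫ τ in (0:ℝ)..C, ω τ) - ∫ τ in (0:ℝ)..(C - ‖y - x‖), ω τ) := by
  set d := ‖y - x‖ with hd
  have hd0 : 0 ≤ d := norm_nonneg _
  -- extending `ω` by a constant to the left of `0` makes its primitive differentiable everywhere
  set w : ℝ → ℝ := fun τ => ω (max τ 0) with hw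
  have hwc : Continuous w :=
    hω_cont.comp_continuous (by fun_prop) (fun τ => Set.mem_Ici.2 (le_max_right τ 0))
  have hwΩ : ∀ q, 0 ≤ q → (∫ τ in (0:ℝ)..q, ω τ) = ∫ τ in (0:ℝ)..q, w τ := by
    intro q hq
    refine intervalIntegral.integral_congr fun τ hτ => ?_
    rw [Set.uIcc_of_le hq] at hτ
    simp [hw, max_eq_left hτ.1]
  have hΩ' : ∀ q, HasDerivAt (fun q => ∫ τ in (0:ℝ)..q, w τ) (w q) q := fun q =>
    intervalIntegral.integral_hasDerivAt_right (hwc.intervalIntegrable _ _)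
      (hwc.stronglyMeasurableAtFilter _ _) hwc.continuousAt
  have hseg : ∀ s ∈ Set.Icc (0:ℝ) 1, x + s • (y - x) ∈ D := fun s hs =>
    hD.add_smul_sub_mem hx hy hs
  have hline : ∀ s : ℝ, HasDerivWithinAt (fun s : ℝ => x + s • (y - x)) (y - x)
      (Set.Icc 0 1) s := by
    intro s
    have := ((hasDerivAt_id s).smul_const (y - x)).const_add x
    simpa using this.hasDerivWithinAt
  have hφ : ∀ s ∈ Set.Icc (0:ℝ) 1, HasDerivWithinAt
      (fun s : ℝ => f (x + s • (y - x)) - f x - s • f' x (y - x))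
      (f' (x + s • (y - x)) (y - x) - f' x (y - x)) (Set.Icc 0 1) s := by
    intro s hs
    have h1 := (hf _ (hseg s hs)).comp_hasDerivWithinAt s (hline s) hseg
    have h2 := ((hasDerivAt_id s).smul_const (f' x (y - x))).hasDerivWithinAt
      (s := Set.Icc (0:ℝ) 1)
    simpa using (h1.sub_const (f x)).fun_sub h2
  have hB : ∀ s : ℝ, HasDerivAt
      (fun s : ℝ => s * (d * ω C) - ((∫ τ in (0:ℝ)..C, w τ) - ∫ τ in (0:ℝ)..(C - s * d), w τ))
      (d * (ω C - w (C - s * d))) s := by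
    intro s
    have hin : HasDerivAt (fun s : ℝ => C - s * d) (-d) s := by
      simpa using ((hasDerivAt_id s).mul_const d).const_sub C
    have h1 := ((hΩ' (C - s * d)).comp s hin).const_sub (∫ τ in (0:ℝ)..C, w τ)
    have h2 := ((hasDerivAt_id s).mul_const (d * ω C)).sub h1
    refine HasDerivAt.congr_deriv h2 ?_
    ring
  have key := image_norm_le_of_norm_deriv_right_le_deriv_boundary
    (f := fun s : ℝ => f (x + s • (y - x)) - f x - s • f' x (y - x))
    (f' := fun s : ℝ => f' (x + s • (y - x)) (y - x) - f' x (y - x))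
    (a := 0) (b := 1)
    (fun s hs => (hφ s hs).continuousWithinAt)
    (fun s hs => (hφ s ⟨hs.1, hs.2.le⟩).mono_of_mem_nhdsWithin (Icc_mem_nhdsGE_of_mem hs))
    (by simp) hB
    (fun s hs => by
      have hs' : s ∈ Set.Icc (0:ℝ) 1 := ⟨hs.1, hs.2.le⟩
      have hpos : 0 ≤ C - s * d := by nlinarith [hs.1, hs.2]
      have e : w (C - s * d) = ω (C - s * d) := by simp [hw, max_eq_left hpos]
      rw [e, ← sub_apply]
      refine (ContinuousLinearMap.le_opNorm _ _).trans ?_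
      rw [mul_comm]
      exact mul_le_mul_of_nonneg_left (hbd s hs') hd0)
    (Set.right_mem_Icc.2 zero_le_one)
  rw [hwΩ C (hd0.trans hdC), hwΩ (C - d) (sub_nonneg.2 hdC)]
  simpa using key

/-- Lemma 3: If for all `1 ≤ k ≤ n` the Newton iterates `x_k` are defined
(i.e. `f'(x_{k-1})` is invertible and `x_k = x_{k-1} - [f'(x_{k-1})]⁻¹(f(x_{k-1}) + g(x_{k-1}))`)
and satisfy `‖x_k - x_{k-1}‖ ≤ t_k - t_{k-1}`, then
`r(x_{n-1}, x_n) = ‖f(x_n) - f(x_{n-1}) - f'(x_{n-1})(x_n - x_{n-1})‖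
  ≤ a - Ω(χ) + Ω(χ - t_n) - t_n·h + Ψ(t_{n-1})`. -/
theorem remainder_estimate
    {X : Type*} [NormedAddCommGroup X] [NormedSpace ℝ X] [CompleteSpace X]
    (D : Set X) (hD : Convex ℝ D) (x₀ : X) (hx₀ : x₀ ∈ D)
    (f g : X → X) (f' : X → X →L[ℝ] X)
    (hf : ∀ x ∈ D, HasFDerivWithinAt f (f' x) D x)
    (hfx₀ : f' x₀ = ContinuousLinearMap.id ℝ X)
    (ω ωinv ψ : ℝ → ℝ)
    (hω_cont : ContinuousOn ω (Set.Ici 0))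
    (hω_mono : StrictMonoOn ω (Set.Ici 0))
    (hω_conc : ConcaveOn ℝ (Set.Ici 0) ω)
    (hω0 : ω 0 = 0)
    (hω_nonneg : ∀ t, 0 ≤ t → 0 ≤ ω t)
    (hωinv_left : ∀ t, 0 ≤ t → ωinv (ω t) = t)
    (hωinv_right : ∀ s, 0 ≤ s → 0 ≤ ωinv s ∧ ω (ωinv s) = s)
    (h : ℝ) (hh0 : 0 ≤ h) (hh1 : h ≤ 1) (hhf : ∀ x ∈ D, h ≤ ‖f' x‖)
    (hreg : ∀ x' ∈ D, ∀ x'' ∈ D,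
      ωinv (min ‖f' x'‖ ‖f' x''‖ - h + ‖f' x'' - f' x'‖)
        - ωinv (min ‖f' x'‖ ‖f' x''‖ - h) ≤ ‖x'' - x'‖)
    (hψ_mono : MonotoneOn ψ (Set.Ici 0))
    (hψ_nonneg : ∀ t, 0 ≤ t → 0 ≤ ψ t)
    (hg : ∀ t, 0 ≤ t → Metric.closedBall x₀ t ⊆ D →
      ∀ x' ∈ Metric.closedBall x₀ t, ∀ x'' ∈ Metric.closedBall x₀ t,
        ‖g x'' - g x'‖ ≤ ψ t * ‖x'' - x'‖)
    (a : ℝ) (ha_pos : 0 < a) (ha : ‖f x₀ + g x₀‖ ≤ a)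
    (χ : ℝ) (hχdef : χ = ωinv (1 - h))
    (Ω Ψ W : ℝ → ℝ)
    (hΩ : ∀ t, Ω t = ∫ τ in (0:ℝ)..t, ω τ)
    (hΨ : ∀ t, Ψ t = ∫ τ in (0:ℝ)..t, ψ τ)
    (hW : ∀ t, W t = a - Ω χ + Ω (χ - t) - t * h + Ψ t)
    (hcond : a < Ω χ + h * χ - Ψ χ)
    (t : ℕ → ℝ) (ht0 : t 0 = 0)
    (htrec : ∀ n, t (n + 1) =
      t n + (a - Ω χ + Ω (χ - t n) - t n * h + Ψ (t n)) / (h + ω (χ - t n)))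
    (n : ℕ) (hn : 1 ≤ n)
    (x : ℕ → X) (hx0 : x 0 = x₀)
    (hxD : ∀ k ≤ n, x k ∈ D)
    (hxdef : ∀ k < n, ∃ A : X ≃L[ℝ] X, (A : X →L[ℝ] X) = f' (x k) ∧
      x (k + 1) = x k - A.symm (f (x k) + g (x k)))
    (hxstep : ∀ k < n, ‖x (k + 1) - x k‖ ≤ t (k + 1) - t k) :
    ‖f (x n) - f (x (n - 1)) - f' (x (n - 1)) (x n - x (n - 1))‖ ≤
      a - Ω χ + Ω (χ - t n) - t n * h + Ψ (t (n - 1)) := by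
  have hωm : MonotoneOn ω (Set.Ici 0) := hω_mono.monotoneOn
  have hinvm : MonotoneOn ωinv (Set.Ici 0) := by
    intro p hp q hq hpq
    obtain ⟨hp0, hp1⟩ := hωinv_right p hp
    obtain ⟨hq0, hq1⟩ := hωinv_right q hq
    refine (hω_mono.le_iff_le (Set.mem_Ici.2 hp0) (Set.mem_Ici.2 hq0)).1 ?_
    rwa [hp1, hq1]
  have hχ0 : 0 ≤ χ := hχdef ▸ (hωinv_right (1 - h) (by linarith)).1
  have hΩ0 : Ω 0 = 0 := by simp [hΩ]
  have hΨ0 : Ψ 0 = 0 := by simp [hΨ]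
  have hχpos : 0 < χ := by
    rcases hχ0.eq_or_lt with e | e
    · rw [← e, hΩ0, hΨ0] at hcond
      linarith
    · exact e
  have hwpos : ∀ s, s < χ → 0 < h + ω (χ - s) := by
    intro s hs
    have := hω_mono (Set.mem_Ici.2 le_rfl) (Set.mem_Ici.2 (sub_nonneg.2 hs.le)) (sub_pos.2 hs)
    linarith
  have hbound : ∀ k ≤ n, 0 ≤ t k ∧ t k < χ ∧ ‖x k - x₀‖ ≤ t k := by
    intro k
    induction k with
    | zero => intro _; simp [ht0, hx0, hχpos]
    | succ k ih =>
      intro hk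
      obtain ⟨h0, h1, h2⟩ := ih (by omega)
      have hst := hxstep k (by omega)
      have hnn := norm_nonneg (x (k + 1) - x k)
      refine ⟨by linarith, ?_, ?_⟩
      · have hΩle := integral_sub_le hωm le_rfl (sub_nonneg.2 h1.le)
        rw [← hΩ, ← hΩ, hΩ0] at hΩle
        have hΨle := integral_le_integral hψ_mono hψ_nonneg h0 h1.le
        rw [← hΨ, ← hΨ] at hΨle
        have : (a - Ω χ + Ω (χ - t k) - t k * h + Ψ (t k)) / (h + ω (χ - t k)) < χ - t k := by
          rw [div_lt_iff₀ (hwpos _ h1)]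
          linarith
        rw [htrec k]
        linarith
      · calc ‖x (k + 1) - x₀‖ ≤ ‖x (k + 1) - x k‖ + ‖x k - x₀‖ :=
            norm_sub_le_norm_sub_add_norm_sub _ _ _
          _ ≤ t (k + 1) := by linarith
  obtain ⟨k, rfl⟩ : ∃ k, n = k + 1 := ⟨n - 1, by omega⟩
  rw [Nat.add_sub_cancel]
  obtain ⟨hk0, hkχ, hkx⟩ := hbound k (by omega)
  obtain ⟨-, hnχ, -⟩ := hbound (k + 1) le_rfl
  have hst := hxstep k (by omega)
  have hxk := hxD k (by omega)
  have hxn := hxD (k + 1) le_rfl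
  set d := ‖x (k + 1) - x k‖ with hd
  have hd0 : 0 ≤ d := norm_nonneg _
  have hmain : ‖f (x (k + 1)) - f (x k) - f' (x k) (x (k + 1) - x k)‖ ≤
      d * ω (χ - t k) - (Ω (χ - t k) - Ω (χ - t k - d)) := by
    rcases subsingleton_or_nontrivial X with hX | hX
    -- here `‖f'(x₀)‖ = 0`, so the gauge at `x₀` is not `χ`; but the remainder vanishes
    · have hd' : d = 0 := by rw [hd, Subsingleton.elim (x (k + 1)) (x k)]; simp
      rw [Subsingleton.elim (f (x (k + 1)) - f (x k) - f' (x k) (x (k + 1) - x k)) 0, hd']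
      simp
    have hgauge : ∀ z ∈ D, χ - ‖z - x₀‖ ≤ ωinv (‖f' z‖ - h) := by
      intro z hz
      have := gauge_sub_le hinvm (hhf x₀ hx₀) (norm_nonneg _) (hhf z hz) (hreg x₀ hx₀ z hz)
      rw [hfx₀, ContinuousLinearMap.norm_id, ← hχdef] at this
      linarith
    rw [hΩ, hΩ]
    refine remainder_le hD hf hω_cont hxk hxn (by linarith) fun s hs => ?_
    have hz := hD.add_smul_sub_mem hxk hxn hs
    have hnorm : ‖x k + s • (x (k + 1) - x k) - x k‖ = s * d := by
      rw [add_sub_cancel_left, norm_smul, Real.norm_of_nonneg hs.1]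
    have hsd0 : 0 ≤ s * d := mul_nonneg hs.1 hd0
    have hsd : s * d ≤ d := mul_le_of_le_one_left hd0 hs.2
    have hzx : ‖x k + s • (x (k + 1) - x k) - x₀‖ ≤ s * d + t k :=
      (norm_sub_le_norm_sub_add_norm_sub _ (x k) _).trans (by rw [hnorm]; linarith)
    have hfin := norm_deriv_sub_le (c := χ - t k - s * d) hωm hω_conc hωinv_right (hhf _ hxk)
      (hhf _ hz) hsd0 (by linarith) (by linarith [hgauge _ hxk]) (by linarith [hgauge _ hz])
      (hnorm ▸ hreg _ hxk _ hz)
    rwa [sub_add_cancel] at hfin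
  -- the bound for `d` is at most the same expression with `t (k + 1) - t k` in place of `d`
  have hinc := integral_sub_le hωm (p := χ - t (k + 1)) (q := χ - t k - d)
    (by linarith) (by linarith)
  rw [← hΩ, ← hΩ] at hinc
  have hωle : ω (χ - t k - d) ≤ ω (χ - t k) :=
    hωm (Set.mem_Ici.2 (by linarith)) (Set.mem_Ici.2 (by linarith)) (by linarith)
  have hinc' := mul_le_mul_of_nonneg_left hωle
    (show 0 ≤ χ - t k - d - (χ - t (k + 1)) by linarith)
  have hrec : (t (k + 1) - t k) * (h + ω (χ - t k)) =
      a - Ω χ + Ω (χ - t k) - t k * h + Ψ (t k) := by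
    rw [htrec k, add_sub_cancel_left, div_mul_cancel₀ _ (hwpos _ hkχ).ne']
  linarith
end
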